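/- Let Γ_n = P_n × P_3 × P_2. Then the independence complex I(Γ_n) has the following homotopy type: I(Γ_{6m}) ≃ (∨_5 S^{9m−1}) ∨ (∨_6 S^{9m−2}) ∨ ⋯ ∨ (∨_6 S^{8m}) ∨ (∨_2 S^{8m−1}) for m ≥ 1; I(Γ_{6m+1}) ≃ S^{9m+1} ∨ (∨_6 S^{9m}) ∨ ⋯ ∨ (∨_6 S^{8m+1}) for m ≥ 0; I(Γ_2) ≃ S^2 ∨ S^2 ∨ S^2 and I(Γ_{6m+2}) ≃ (∨_5 S^{9m+2}) ∨ (∨_6 S^{9m+1}) ∨ ⋯ ∨ (∨_6 S^{8m+3}) ∨ (∨_4 S^{8m+2}) for m ≥ 1; I(Γ_{6m+3}) ≃ S^{9m+4} ∨ (∨_6 S^{9m+3}) ∨ ⋯ ∨ (∨_6 S^{8m+4}) ∨ (∨_2 S^{8m+3}) for m ≥ 0; I(Γ_{6m+4}) ≃ (∨_5 S^{9m+5}) ∨ (∨_6 S^{9m+4}) ∨ ⋯ ∨ (∨_6 S^{8m+5}) for m ≥ 0; and I(Γ_{6m+5}) ≃ S^{9m+7} ∨ (∨_6 S^{9m+6})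 ∨ ⋯ ∨ (∨_6 S^{8m+7}) ∨ (∨_4 S^{8m+6}) for m ≥ 0. Here ∨_r S^d denotes a wedge of r copies of the d-sphere, and '⋯' ranges over wedges of 6 spheres in each intermediate dimension. -/

import Mathlib

open SimpleGraph

/-- An abstract simplicial complex on the underlying vertex set `V`. -/
structure Cplx (V : Type) where
  faces : Finset V → Prop
  down_closed : ∀ ⦃σ τ : Finset V⦄, σ ⊆ τ → faces τ → faces σ

/-- The independence complex of a graph: the faces are the independent sets. -/
def indepCpx {V : Type} (G : SimpleGraph V) : Cplx V where
  faces σ := ∀ u ∈ σ, ∀ v ∈ σ, ¬ G.Adj u v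
  down_closed := fun _ _ hst h u hu v hv => h u (hst hu) v (hst hv)

open Classical in
/-- The geometric realization of a simplicial complex, as a subspace of `V → ℝ`. -/
def Cplx.space {V : Type} [Fintype V] (K : Cplx V) : Type :=
  {f : V → ℝ // (∑ v, f v = 1) ∧ (∀ v, 0 ≤ f v) ∧
    K.faces (Finset.univ.filter fun v => f v ≠ 0)}

instance {V : Type} [Fintype V] (K : Cplx V) : TopologicalSpace K.space :=
  instTopologicalSpaceSubtype

/-- The `d`-dimensional unit sphere. -/
abbrev sph (d : ℕ) : Type := Metric.sphere (0 : EuclideanSpace ℝ (Fin (d + 1))) 1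

/-- A base point on the `d`-sphere. -/
noncomputable def basePt (d : ℕ) : sph d :=
  ⟨EuclideanSpace.single 0 1, by simp [EuclideanSpace.norm_single]⟩

/-- The wedge of `c d` copies of the `d`-sphere, over all dimensions `d`
(the basepoints of all the spheres are identified). -/
noncomputable def sphereWedge (c : ℕ → ℕ) : Type :=
  Quot (fun (x y : Σ d : ℕ, Fin (c d) × sph d) =>
    x = y ∨ (x.2.2 = basePt x.1 ∧ y.2.2 = basePt y.1))

noncomputable instance (c : ℕ → ℕ) : TopologicalSpace (sphereWedge c) :=
  instTopologicalSpaceQuot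

/-- The vertex set of the grid graph `P_n × P_3 × P_2`. -/
abbrev GV (n : ℕ) : Type := Fin n × Fin 3 × Fin 2

/-- The grid graph `Γ_n = P_n × P_3 × P_2` (cartesian product of paths). -/
def Gam (n : ℕ) : SimpleGraph (GV n) :=
  (pathGraph n).boxProd ((pathGraph 3).boxProd (pathGraph 2))

/-- A finite flag complex: `r a a` says that `a` is a vertex, and a set is a face when any two of
its elements (equal or not) are related by `r`. -/
structure FlagCplx where
  V : Type
  r : V → V → Prop
  symm' : ∀ a b, r a b → r b a
  fin : {a | r a a}.Finite

namespace FlagCplx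

lemma symm (F : FlagCplx) {a b : F.V} (h : F.r a b) : F.r b a := F.symm' a b h

/-- The finite set of vertices. -/
noncomputable def verts (F : FlagCplx) : Finset F.V := F.fin.toFinset

@[simp] lemma mem_verts {F : FlagCplx} {a : F.V} : a ∈ F.verts ↔ F.r a a := by
  simp [verts]

/-- The geometric realization. -/
abbrev real (F : FlagCplx) : Type :=
  {f : F.V → ℝ // (∀ v, 0 ≤ f v) ∧ (∀ u v, f u ≠ 0 → f v ≠ 0 → F.r u v) ∧
    ∑ v ∈ F.verts, f v = 1}

/-- Remove the pair `a, b` (the vertex `a` if `a = b`). -/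
def del (F : FlagCplx) (a b : F.V) : FlagCplx where
  V := F.V
  r u v := F.r u v ∧ ¬ ((u = a ∧ v = b) ∨ (u = b ∧ v = a))
  symm' _ _ h := ⟨F.symm h.1, fun h' => h.2 (by tauto)⟩
  fin := F.fin.subset fun _ h => h.1

section Collapse

variable {F : FlagCplx} {a b x : F.V}

/-- The direction in which mass is moved from `a` and `b` to `x`. -/
noncomputable def moveDir (F : FlagCplx) (a b x : F.V) (v : F.V) : ℝ :=
  open Classical in
  (if a = b then 1 / 2 else 1) *
    (2 * (if v = x then 1 else 0) - (if v = a then 1 else 0) - (if v = b then 1 else 0))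

lemma moveDir_left (ha : x ≠ a) : moveDir F a b x a = -1 := by
  unfold moveDir
  by_cases h : a = b
  · subst h; simp [ha.symm]; norm_num
  · simp [ha.symm, h]

lemma moveDir_right (hb : x ≠ b) : moveDir F a b x b = -1 := by
  unfold moveDir
  by_cases h : a = b
  · subst h; simp [hb.symm]; norm_num
  · simp [hb.symm, h, Ne.symm h]

lemma moveDir_nonneg {v : F.V} (ha : v ≠ a) (hb : v ≠ b) : 0 ≤ moveDir F a b x v := by
  unfold moveDir
  simp only [ha, hb, if_false]
  split_ifs <;> norm_num

lemma moveDir_eq_zero {v : F.V} (ha : v ≠ a) (hb : v ≠ b) (hx : v ≠ x) :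
    moveDir F a b x v = 0 := by
  simp [moveDir, ha, hb, hx]

lemma sum_moveDir (ha : F.r a a) (hb : F.r b b) (hx : F.r x x) :
    ∑ v ∈ F.verts, moveDir F a b x v = 0 := by
  classical
  unfold moveDir
  rw [← Finset.mul_sum, Finset.sum_sub_distrib, Finset.sum_sub_distrib, ← Finset.mul_sum]
  have key : ∀ y : F.V, F.r y y → ∑ v ∈ F.verts, (if v = y then (1 : ℝ) else 0) = 1 := by
    intro y hy
    rw [Finset.sum_ite_eq', if_pos (mem_verts.2 hy)]
  rw [key x hx, key a ha, key b hb]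
  norm_num

/-- Moving the fraction `t` of the common mass of `a` and `b` to `x`. -/
noncomputable def moveFun (F : FlagCplx) (a b x : F.V) (t : ℝ) (f : F.V → ℝ) (v : F.V) : ℝ :=
  f v + t * min (f a) (f b) * moveDir F a b x v

lemma moveFun_nonneg (ha : x ≠ a) (hb : x ≠ b) {t : ℝ} (h0 : 0 ≤ t) (h1 : t ≤ 1)
    {f : F.V → ℝ} (hf : ∀ v, 0 ≤ f v) (v : F.V) : 0 ≤ moveFun F a b x t f v := by
  have hm : 0 ≤ min (f a) (f b) := le_min (hf a) (hf b)
  unfold moveFun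
  by_cases hva : v = a
  · subst hva
    rw [moveDir_left ha]
    nlinarith [min_le_left (f v) (f b)]
  by_cases hvb : v = b
  · subst hvb
    rw [moveDir_right hb]
    nlinarith [min_le_right (f a) (f v)]
  have := moveDir_nonneg (x := x) hva hvb
  have := hf v
  positivity

lemma moveFun_mem (ha : F.r a a) (hb : F.r b b) (hx : F.r x x)
    (hxa : x ≠ a) (hxb : x ≠ b)
    (h : ∀ u, F.r u u → F.r u a → F.r u b → F.r u x) {t : ℝ} (h0 : 0 ≤ t) (h1 : t ≤ 1)
    (f : F.real) :
    (∀ v, 0 ≤ moveFun F a b x t f.1 v) ∧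
    (∀ u v, moveFun F a b x t f.1 u ≠ 0 → moveFun F a b x t f.1 v ≠ 0 → F.r u v) ∧
    ∑ v ∈ F.verts, moveFun F a b x t f.1 v = 1 := by
  obtain ⟨f, hf, hr, hs⟩ := f
  refine ⟨moveFun_nonneg hxa hxb h0 h1 hf, ?_, ?_⟩
  · by_cases hm : min (f a) (f b) = 0
    · simpa [moveFun, hm] using hr
    have hfa : f a ≠ 0 := fun h => hm (by rw [h]; exact min_eq_left (hf b))
    have hfb : f b ≠ 0 := fun h => hm (by rw [h]; exact min_eq_right (hf a))
    have key : ∀ v, moveFun F a b x t f v ≠ 0 → f v ≠ 0 ∨ v = x := by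
      intro v hv
      by_contra! hc
      by_cases hva : v = a
      · exact hfa (hva ▸ hc.1)
      by_cases hvb : v = b
      · exact hfb (hvb ▸ hc.1)
      exact hv (by simp [moveFun, hc.1, moveDir_eq_zero hva hvb hc.2])
    have kx : ∀ v, f v ≠ 0 → F.r v x := fun v hv => h v (hr v v hv hv) (hr v a hv hfa) (hr v b hv hfb)
    intro u v hu hv
    rcases key u hu with hu | hu <;> rcases key v hv with hv | hv
    · exact hr u v hu hv
    · exact hv ▸ kx u hu
    · exact hu ▸ F.symm (kx v hv)
    · exact hu ▸ hv ▸ hx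
  · simp only [moveFun]
    rw [Finset.sum_add_distrib, ← Finset.mul_sum, sum_moveDir ha hb hx, hs]
    simp

lemma continuous_moveFun :
    Continuous fun p : ℝ × (F.V → ℝ) => moveFun F a b x p.1 p.2 := by
  unfold moveFun
  fun_prop

lemma sum_verts_subset {V : Type} {s t : Finset V} (hst : s ⊆ t) {f : V → ℝ}
    (h : ∀ v, f v ≠ 0 → v ∈ s) : ∑ v ∈ s, f v = ∑ v ∈ t, f v :=
  Finset.sum_subset hst fun v _ hv => by
    by_contra h'; exact hv (h v h')

lemma moveFun_one_mem (ha : F.r a a) (hb : F.r b b) (hx : F.r x x)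
    (hxa : x ≠ a) (hxb : x ≠ b)
    (h : ∀ u, F.r u u → F.r u a → F.r u b → F.r u x) (f : F.real) :
    (∀ v, 0 ≤ moveFun F a b x 1 f.1 v) ∧
    (∀ u v, moveFun F a b x 1 f.1 u ≠ 0 → moveFun F a b x 1 f.1 v ≠ 0 → (F.del a b).r u v) ∧
    ∑ v ∈ (F.del a b).verts, moveFun F a b x 1 f.1 v = 1 := by
  obtain ⟨h1, h2, h3⟩ := moveFun_mem ha hb hx hxa hxb h zero_le_one le_rfl f
  have key : moveFun F a b x 1 f.1 a = 0 ∨ moveFun F a b x 1 f.1 b = 0 := by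
    simp only [moveFun, moveDir_left hxa, moveDir_right hxb]
    rcases min_choice (f.1 a) (f.1 b) with h | h <;> rw [h] <;> simp
  have h2' : ∀ u v, moveFun F a b x 1 f.1 u ≠ 0 → moveFun F a b x 1 f.1 v ≠ 0 →
      (F.del a b).r u v := by
    intro u v hu hv
    refine ⟨h2 u v hu hv, ?_⟩
    rintro (⟨rfl, rfl⟩ | ⟨rfl, rfl⟩) <;> tauto
  refine ⟨h1, h2', ?_⟩
  refine (sum_verts_subset (V := F.V) (fun v hv => ?_) fun v hv =>
    (mem_verts (F := F.del a b)).2 (h2' v v hv hv)).trans h3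
  exact mem_verts.2 ((mem_verts (F := F.del a b)).1 hv).1

/-- Removing a pair whose link is a cone does not change the homotopy type. -/
theorem real_del (ha : F.r a a) (hb : F.r b b) (hx : F.r x x)
    (hxa : x ≠ a) (hxb : x ≠ b) (h : ∀ u, F.r u u → F.r u a → F.r u b → F.r u x) :
    Nonempty (ContinuousMap.HomotopyEquiv F.real (F.del a b).real) := by
  have cont : Continuous fun p : unitInterval × F.real =>
      moveFun F a b x (p.1 : ℝ) p.2.1 :=
    (continuous_moveFun (F := F) (a := a) (b := b) (x := x)).comp
      ((continuous_subtype_val.comp continuous_fst).prodMk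
        (continuous_subtype_val.comp continuous_snd))
  let c : C(F.real, (F.del a b).real) :=
    ⟨fun f => ⟨moveFun F a b x 1 f.1, moveFun_one_mem ha hb hx hxa hxb h f⟩,
      Continuous.subtype_mk (cont.comp (Continuous.prodMk_right (1 : unitInterval))) _⟩
  let i : C((F.del a b).real, F.real) :=
    ⟨fun f => ⟨f.1, f.2.1, fun u v hu hv => (f.2.2.1 u v hu hv).1,
      (sum_verts_subset (V := F.V) (fun v hv => mem_verts.2 ((mem_verts (F := F.del a b)).1 hv).1)
        fun v hv => (mem_verts (F := F.del a b)).2 (f.2.2.1 v v hv hv)).symm.trans f.2.2.2⟩,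
      Continuous.subtype_mk continuous_subtype_val _⟩
  have hci : c.comp i = ContinuousMap.id _ := by
    ext1 f
    apply Subtype.ext
    funext v
    have hm : min (f.1 a) (f.1 b) = 0 := by
      by_contra hm
      have hfa : f.1 a ≠ 0 := fun h => hm (by rw [h]; exact min_eq_left (f.2.1 b))
      have hfb : f.1 b ≠ 0 := fun h => hm (by rw [h]; exact min_eq_right (f.2.1 a))
      exact (f.2.2.1 a b hfa hfb).2 (Or.inl ⟨rfl, rfl⟩)
    change f.1 v + 1 * min (f.1 a) (f.1 b) * _ = f.1 v
    rw [hm]; simp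
  refine ⟨⟨c, i, ⟨ContinuousMap.Homotopy.symm ⟨⟨fun p => ⟨moveFun F a b x p.1 p.2.1,
    moveFun_mem ha hb hx hxa hxb h p.1.2.1 p.1.2.2 p.2⟩, Continuous.subtype_mk cont _⟩,
    ?_, ?_⟩⟩, hci ▸ ContinuousMap.Homotopic.refl _⟩⟩
  · intro f
    apply Subtype.ext
    funext v
    simp [moveFun]
  · intro f
    rfl

end Collapse
/-- A combinatorial equivalence which implies that the realizations are homotopy equivalent. -/
inductive Eqv : FlagCplx → FlagCplx → Prop
  | refl (F) : Eqv F F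
  | symm {F G} : Eqv F G → Eqv G F
  | trans {F G H} : Eqv F G → Eqv G H → Eqv F H
  | collapse (F : FlagCplx) (a b x : F.V) (ha : F.r a a) (hb : F.r b b) (hx : F.r x x)
      (hxa : x ≠ a) (hxb : x ≠ b) (h : ∀ u, F.r u u → F.r u a → F.r u b → F.r u x) :
      Eqv F (F.del a b)
  | iso {F G : FlagCplx} (e : F.V → G.V) (e' : G.V → F.V)
      (h : ∀ u v, F.r u u → F.r v v → (G.r (e u) (e v) ↔ F.r u v))
      (h' : ∀ u, G.r u u → F.r (e' u) (e' u))
      (he : ∀ u, F.r u u → e' (e u) = u) (he' : ∀ u, G.r u u → e (e' u) = u) : Eqv F G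

/-- The map of realizations induced by a partial bijection of vertices. -/
noncomputable def isoFun {F G : FlagCplx} (e' : G.V → F.V) (f : F.V → ℝ) (w : G.V) : ℝ :=
  open Classical in if G.r w w then f (e' w) else 0

lemma isoFun_mem {F G : FlagCplx} (e : F.V → G.V) (e' : G.V → F.V)
    (h : ∀ u v, F.r u u → F.r v v → (G.r (e u) (e v) ↔ F.r u v))
    (h' : ∀ u, G.r u u → F.r (e' u) (e' u))
    (he : ∀ u, F.r u u → e' (e u) = u) (he' : ∀ u, G.r u u → e (e' u) = u) (f : F.real) :
    (∀ v, 0 ≤ isoFun (G := G) e' f.1 v) ∧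
    (∀ u v, isoFun (G := G) e' f.1 u ≠ 0 → isoFun (G := G) e' f.1 v ≠ 0 → G.r u v) ∧
    ∑ v ∈ G.verts, isoFun (G := G) e' f.1 v = 1 := by
  obtain ⟨f, h0, hr, hs⟩ := f
  refine ⟨fun v => ?_, fun u v hu hv => ?_, ?_⟩
  · unfold isoFun; split_ifs
    exacts [h0 _, le_rfl]
  · unfold isoFun at hu hv
    split_ifs at hu hv with hu' hv' <;> try contradiction
    have := (h _ _ (h' u hu') (h' v hv')).2 (hr _ _ hu hv)
    rwa [he' u hu', he' v hv'] at this
  · refine (Finset.sum_bij' (fun v _ => e' v) (fun v _ => e v) ?_ ?_ ?_ ?_ ?_).trans hs <;>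
      simp only [mem_verts]
    · exact h'
    · exact fun u hu => (h u u hu hu).2 hu
    · exact he'
    · exact he
    · intro u hu
      simp [isoFun, hu]

lemma isoFun_isoFun {F G : FlagCplx} (e : F.V → G.V) (e' : G.V → F.V)
    (h : ∀ u, F.r u u → G.r (e u) (e u)) (he : ∀ u, F.r u u → e' (e u) = u) (f : F.real) :
    isoFun (G := F) e (isoFun (G := G) e' f.1) = f.1 := by
  funext u
  unfold isoFun
  by_cases hu : F.r u u
  · rw [if_pos hu, if_pos (h u hu), he u hu]
  · rw [if_neg hu]
    by_contra hc
    exact hu (f.2.2.1 u u (Ne.symm hc) (Ne.symm hc))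

lemma continuous_isoFun {F G : FlagCplx} (e' : G.V → F.V) :
    Continuous (isoFun (F := F) (G := G) e') := by
  refine continuous_pi fun w => ?_
  unfold isoFun
  split_ifs <;> fun_prop

/-- A partial bijection of vertices preserving the relation induces a homeomorphism. -/
noncomputable def realIso {F G : FlagCplx} (e : F.V → G.V) (e' : G.V → F.V)
    (h : ∀ u v, F.r u u → F.r v v → (G.r (e u) (e v) ↔ F.r u v))
    (h' : ∀ u, G.r u u → F.r (e' u) (e' u))
    (he : ∀ u, F.r u u → e' (e u) = u) (he' : ∀ u, G.r u u → e (e' u) = u) :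
    F.real ≃ₜ G.real where
  toFun f := ⟨isoFun e' f.1, isoFun_mem e e' h h' he he' f⟩
  invFun f := ⟨isoFun e f.1, isoFun_mem e' e (fun u v hu hv => by
      rw [← h _ _ (h' u hu) (h' v hv), he' u hu, he' v hv])
      (fun u hu => (h u u hu hu).2 hu) he' he f⟩
  left_inv f := Subtype.ext (isoFun_isoFun e e' (fun u hu => (h u u hu hu).2 hu) he f)
  right_inv f := Subtype.ext (isoFun_isoFun e' e h' he' f)
  continuous_toFun := ((continuous_isoFun e').comp continuous_subtype_val).subtype_mk _
  continuous_invFun := ((continuous_isoFun e).comp continuous_subtype_val).subtype_mk _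

theorem Eqv.real {F G : FlagCplx} (h : Eqv F G) :
    Nonempty (ContinuousMap.HomotopyEquiv F.real G.real) := by
  induction h with
  | refl F => exact ⟨ContinuousMap.HomotopyEquiv.refl _⟩
  | symm _ ih => exact ih.map ContinuousMap.HomotopyEquiv.symm
  | trans _ _ ih₁ ih₂ => exact ih₁.elim fun a => ih₂.map fun b => a.trans b
  | collapse F a b x ha hb hx hxa hxb h => exact real_del ha hb hx hxa hxb h
  | iso e e' h h' he he' => exact ⟨(realIso e e' h h' he he').toHomotopyEquiv⟩

section

variable {V : Type} {r r' : V → V → Prop} {s : ∀ a b, r a b → r b a}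
  {s' : ∀ a b, r' a b → r' b a} {f : {a | r a a}.Finite} {f' : {a | r' a a}.Finite}

theorem Eqv.of_iff (h : ∀ a, r a a ↔ r' a a) (h' : ∀ a b, r a a → r b b → (r a b ↔ r' a b)) :
    Eqv ⟨V, r, s, f⟩ ⟨V, r', s', f'⟩ :=
  Eqv.iso (F := ⟨V, r, s, f⟩) (G := ⟨V, r', s', f'⟩) id id
    (fun u v hu hv => (h' u v hu hv).symm) (fun u hu => (h u).2 hu) (fun _ _ => rfl) fun _ _ => rfl

/-- The relation obtained by removing a list of pairs. -/
def delRel (r : V → V → Prop) (L : List (V × V)) (u v : V) : Prop :=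
  r u v ∧ ∀ p ∈ L, ¬ ((u = p.1 ∧ v = p.2) ∨ (u = p.2 ∧ v = p.1))

/-- Remove a list of pairs. -/
def delList (F : FlagCplx) (L : List (F.V × F.V)) : FlagCplx where
  V := F.V
  r := delRel F.r L
  symm' _ _ h := ⟨F.symm h.1, fun p hp h' => h.2 p hp (by tauto)⟩
  fin := F.fin.subset fun _ h => h.1

theorem Eqv.delList (F : FlagCplx) (L : List (F.V × F.V))
    (h : ∀ p ∈ L, ∃ x, delRel F.r L x x ∧
      ∀ u, F.r u u → F.r u p.1 → F.r u p.2 → delRel F.r L u x) :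
    Eqv F (F.delList L) := by
  suffices H : ∀ M : List (F.V × F.V), M ⊆ L → Eqv F (F.delList M) from H L fun _ h => h
  intro M
  induction M with
  | nil =>
    intro _
    exact Eqv.of_iff (fun a => by simp [delRel]) fun a b _ _ => by simp [delRel]
  | cons p M ih =>
    intro hM
    have hpL : p ∈ L := hM (by simp)
    have hML : M ⊆ L := fun q hq => hM (by simp [hq])
    refine (ih hML).trans ?_
    have mono : ∀ u v, delRel F.r L u v → delRel F.r M u v :=
      fun u v h => ⟨h.1, fun q hq => h.2 q (hML hq)⟩
    have hcons : ∀ u v, delRel F.r (p :: M) u v ↔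
        delRel F.r M u v ∧ ¬ ((u = p.1 ∧ v = p.2) ∨ (u = p.2 ∧ v = p.1)) := by
      intro u v
      simp only [delRel, List.forall_mem_cons]
      tauto
    by_cases hp : delRel F.r M p.1 p.1 ∧ delRel F.r M p.2 p.2 ∧ delRel F.r M p.1 p.2
    · obtain ⟨h1, h2, h3⟩ := hp
      obtain ⟨x, hx, hux⟩ := h p hpL
      have hxp : x ≠ p.1 := by
        rintro rfl
        exact (hux p.2 h2.1 (F.symm h3.1) h2.1).2 p hpL (Or.inr ⟨rfl, rfl⟩)
      have hxq : x ≠ p.2 := by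
        rintro rfl
        exact (hux p.1 h1.1 h1.1 h3.1).2 p hpL (Or.inl ⟨rfl, rfl⟩)
      refine (Eqv.collapse (F.delList M) p.1 p.2 x h1 h2 (mono _ _ hx) hxp hxq
        fun u hu hua hub => mono _ _ (hux u hu.1 hua.1 hub.1)).trans ?_
      exact Eqv.of_iff (fun a => (hcons a a).symm) fun a b _ _ => (hcons a b).symm
    · have key : ∀ u v, delRel F.r M u u → delRel F.r M v v →
          (delRel F.r M u v ↔ delRel F.r (p :: M) u v) := by
        intro u v hu hv
        rw [hcons]
        refine ⟨fun huv => ⟨huv, ?_⟩, And.left⟩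
        rintro (⟨rfl, rfl⟩ | ⟨rfl, rfl⟩)
        · exact hp ⟨hu, hv, huv⟩
        · exact hp ⟨hv, hu, (F.delList M).symm huv⟩
      exact Eqv.of_iff (fun a => ⟨fun ha => (key a a ha ha).1 ha, fun ha => ((hcons a a).1 ha).1⟩)
        key

/-- Removing a collection of pairs, each of which is dominated by a vertex that survives. -/
theorem Eqv.of_remove (hsub : ∀ a b, r' a a → r' b b → r' a b → r a b)
    (h : ∀ a b, r a a → r b b → r a b → (a = b ∧ ¬ r' a a ∨ r' a a ∧ r' b b ∧ ¬ r' a b) →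
      ∃ x, r' x x ∧ ∀ u, r u u → r u a → r u b → r u x ∧ (r' u u → r' u x)) :
    Eqv ⟨V, r, s, f⟩ ⟨V, r', s', f'⟩ := by
  classical
  have hfin : {p : V × V | r p.1 p.1 ∧ r p.2 p.2 ∧ r p.1 p.2 ∧
      (p.1 = p.2 ∧ ¬ r' p.1 p.1 ∨ r' p.1 p.1 ∧ r' p.2 p.2 ∧ ¬ r' p.1 p.2)}.Finite :=
    (f.prod f).subset fun p hp => ⟨hp.1, hp.2.1⟩
  set L := hfin.toFinset.toList with hL
  have memL : ∀ p, p ∈ L ↔ r p.1 p.1 ∧ r p.2 p.2 ∧ r p.1 p.2 ∧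
      (p.1 = p.2 ∧ ¬ r' p.1 p.1 ∨ r' p.1 p.1 ∧ r' p.2 p.2 ∧ ¬ r' p.1 p.2) := by
    intro p
    simp [hL]
  have good : ∀ u v, r u v → (r' v v) → (r' u u → r' u v) → delRel r L u v := by
    refine fun u v huv hv hu => ⟨huv, fun p hp hc => ?_⟩
    have := ((memL p).1 hp).2.2.2
    rcases hc with ⟨rfl, rfl⟩ | ⟨rfl, rfl⟩
    · rcases this with ⟨h1, h2⟩ | ⟨h1, h2, h3⟩
      · exact h2 (h1 ▸ hv)
      · exact h3 (hu h1)
    · rcases this with ⟨h1, h2⟩ | ⟨h1, h2, h3⟩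
      · exact h2 hv
      · exact h3 (s' _ _ (hu h2))
  have hdiag : ∀ a, delRel r L a a ↔ r' a a := by
    intro a
    refine ⟨fun ha => ?_, fun ha => good a a (hsub a a ha ha ha) ha fun _ => ha⟩
    by_contra hc
    exact ha.2 (a, a) ((memL _).2 ⟨ha.1, ha.1, ha.1, Or.inl ⟨rfl, hc⟩⟩) (Or.inl ⟨rfl, rfl⟩)
  refine (Eqv.delList ⟨V, r, s, f⟩ L ?_).trans (Eqv.of_iff hdiag fun a b ha hb => ?_)
  · intro p hp
    obtain ⟨h1, h2, h3, h4⟩ := (memL p).1 hp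
    obtain ⟨x, hx, hux⟩ := h p.1 p.2 h1 h2 h3 h4
    exact ⟨x, (hdiag x).2 hx, fun u hu hua hub =>
      good u x (hux u hu hua hub).1 hx (hux u hu hua hub).2⟩
  · refine ⟨fun hab => ?_, fun hab => good a b (hsub a b ?_ ?_ hab) ?_ fun _ => hab⟩
    · by_contra hc
      exact hab.2 (a, b) ((memL _).2 ⟨ha.1, hb.1, hab.1, Or.inr ⟨(hdiag a).1 ha, (hdiag b).1 hb,
        hc⟩⟩) (Or.inl ⟨rfl, rfl⟩)
    exacts [(hdiag a).1 ha, (hdiag b).1 hb, (hdiag b).1 hb]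

end

/-- The relation of `glue`. -/
def glueRel (F G : FlagCplx) (c : F.V → G.V → Prop) : F.V ⊕ G.V → F.V ⊕ G.V → Prop
  | .inl u, .inl v => F.r u v
  | .inl u, .inr t => c u t
  | .inr t, .inl u => c u t
  | .inr s, .inr t => G.r s t

/-- The union of two flag complexes, with cross relation `c`. -/
def glue (F G : FlagCplx) (c : F.V → G.V → Prop) : FlagCplx where
  V := F.V ⊕ G.V
  r := glueRel F G c
  symm' := by
    rintro (a | a) (b | b) h
    exacts [F.symm h, h, h, G.symm h]
  fin := ((F.fin.image Sum.inl).union (G.fin.image Sum.inr)).subset (by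
    rintro (a | a) h
    · exact Or.inl ⟨a, h, rfl⟩
    · exact Or.inr ⟨a, h, rfl⟩)

section
variable {F F' G : FlagCplx} {c c' : F.V → G.V → Prop}

lemma glue_of_iff (h : ∀ u t, F.r u u → G.r t t → (c u t ↔ c' u t)) :
    Eqv (glue F G c) (glue F G c') := by
  refine Eqv.of_iff ?_ ?_
  · rintro (a | a) <;> rfl
  · rintro (a | a) (b | b) ha hb
    exacts [Iff.rfl, h a b ha hb, h b a hb ha, Iff.rfl]

lemma glue_iso {c' : F'.V → G.V → Prop} (e : F.V → F'.V) (e' : F'.V → F.V)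
    (h : ∀ u v, F.r u u → F.r v v → (F'.r (e u) (e v) ↔ F.r u v))
    (h' : ∀ u, F'.r u u → F.r (e' u) (e' u))
    (he : ∀ u, F.r u u → e' (e u) = u) (he' : ∀ u, F'.r u u → e (e' u) = u)
    (hc : ∀ u t, F.r u u → G.r t t → (c' (e u) t ↔ c u t)) :
    Eqv (glue F G c) (glue F' G c') := by
  refine Eqv.iso (F := glue F G c) (G := glue F' G c') (Sum.map e id) (Sum.map e' id) ?_ ?_ ?_ ?_
  · rintro (a | a) (b | b) ha hb
    exacts [h a b ha hb, hc a b ha hb, hc b a hb ha, Iff.rfl]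
  · rintro (a | a) ha
    exacts [h' a ha, ha]
  · rintro (a | a) ha
    exacts [congrArg Sum.inl (he a ha), rfl]
  · rintro (a | a) ha
    exacts [congrArg Sum.inl (he' a ha), rfl]

lemma glue_comm : Eqv (glue F G c) (glue G F fun t u => c u t) := by
  refine Eqv.iso (F := glue F G c) (G := glue G F fun t u => c u t) Sum.swap Sum.swap ?_ ?_ ?_ ?_
  · rintro (a | a) (b | b) ha hb <;> rfl
  · rintro (a | a) ha <;> exact ha
  · rintro (a | a) ha <;> rfl
  · rintro (a | a) ha <;> rfl

lemma glue_collapse {a b x : F.V} (ha : F.r a a) (hb : F.r b b) (hx : F.r x x)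
    (hxa : x ≠ a) (hxb : x ≠ b) (h : ∀ u, F.r u u → F.r u a → F.r u b → F.r u x)
    (hc : ∀ t, G.r t t → c a t → c b t → c x t) :
    Eqv (glue F G c) (glue (F.del a b) G c) := by
  refine (Eqv.collapse (glue F G c) (.inl a) (.inl b) (.inl x) ha hb hx (fun e => hxa (Sum.inl.inj e))
    (fun e => hxb (Sum.inl.inj e)) ?_).trans ?_
  · rintro (u | u) hu hua hub
    exacts [h u hu hua hub, hc u hu hua hub]
  · refine Eqv.of_iff ?_ ?_
    · rintro (u | u) <;> simp [glue, glueRel, del]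
    · rintro (u | u) (v | v) hu hv <;> simp [glue, glueRel, del]

/-- Removing cross pairs which are dominated. -/
lemma glue_remove (hsub : ∀ u t, c' u t → c u t)
    (h : ∀ u t, F.r u u → G.r t t → c u t → ¬ c' u t →
      (∃ x, F.r x x ∧ (∀ v, F.r v v → F.r v u → c v t → F.r v x) ∧
        ∀ s, G.r s s → c u s → G.r s t → c' x s) ∨
      (∃ x, G.r x x ∧ (∀ v, F.r v v → F.r v u → c v t → c' v x) ∧
        ∀ s, G.r s s → c u s → G.r s t → G.r s x)) :
    Eqv (glue F G c) (glue F G c') := by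
  have key : ∀ u t, F.r u u → G.r t t → c u t → ¬ c' u t →
      ∃ x, glueRel F G c' x x ∧ ∀ y, glueRel F G c y y → glueRel F G c y (.inl u) →
        glueRel F G c y (.inr t) →
        glueRel F G c y x ∧ (glueRel F G c' y y → glueRel F G c' y x) := by
    intro u t hu ht hut hut'
    rcases h u t hu ht hut hut' with ⟨x, hx, h1, h2⟩ | ⟨x, hx, h1, h2⟩
    · refine ⟨.inl x, hx, ?_⟩
      rintro (v | s) hy h3 h4
      · exact ⟨h1 v hy h3 h4, fun _ => h1 v hy h3 h4⟩
      · exact ⟨hsub _ _ (h2 s hy h3 h4), fun _ => h2 s hy h3 h4⟩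
    · refine ⟨.inr x, hx, ?_⟩
      rintro (v | s) hy h3 h4
      · exact ⟨hsub _ _ (h1 v hy h3 h4), fun _ => h1 v hy h3 h4⟩
      · exact ⟨h2 s hy h3 h4, fun _ => h2 s hy h3 h4⟩
  refine Eqv.of_remove ?_ ?_
  · rintro (a | a) (b | b) ha hb hab
    exacts [hab, hsub _ _ hab, hsub _ _ hab, hab]
  · rintro (a | a) (b | b) ha hb hab hrem
    · exact (hrem.elim (fun h => h.2 ha) fun h => h.2.2 hab).elim
    · exact key a b ha hb hab (hrem.elim (fun h => by simp at h) fun h => h.2.2)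
    · obtain ⟨x, hx, hy⟩ := key b a hb ha hab (hrem.elim (fun h => by simp at h) fun h => h.2.2)
      exact ⟨x, hx, fun y h1 h2 h3 => hy y h1 h3 h2⟩
    · exact (hrem.elim (fun h => h.2 ha) fun h => h.2.2 hab).elim

end

/-- The complex without vertices. -/
def nothing : FlagCplx := ⟨Empty, fun _ _ => False, fun _ _ h => h, Set.toFinite _⟩

/-- The complex with one vertex. -/
def point : FlagCplx := ⟨Unit, fun _ _ => True, fun _ _ h => h, Set.toFinite _⟩

/-- The complex with two isolated vertices. -/
def poles : FlagCplx := ⟨Bool, fun s t => s = t, fun _ _ h => h.symm, Set.toFinite _⟩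

/-- Attach a cone over the full subcomplex with vertices in `B`. -/
def cone (F : FlagCplx) (B : F.V → Prop) : FlagCplx := glue F point fun u _ => B u

/-- The suspension. -/
def susp (F : FlagCplx) : FlagCplx := glue F poles fun _ _ => True

/-- The complexes `F` and `G` joined by an edge from `w` to `z`. -/
def edgeWedge (F : FlagCplx) (w : F.V) (G : FlagCplx) (z : G.V) : FlagCplx :=
  glue F G fun u t => u = w ∧ t = z

/-- The full subcomplex with vertices in `B`. -/
def restrict (F : FlagCplx) (B : F.V → Prop) : FlagCplx where
  V := F.V
  r u v := F.r u v ∧ B u ∧ B v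
  symm' _ _ h := ⟨F.symm h.1, h.2.2, h.2.1⟩
  fin := F.fin.subset fun _ h => h.1

theorem susp_congr {F F' : FlagCplx} (h : Eqv F F') : Eqv (susp F) (susp F') := by
  induction h with
  | refl F => exact .refl _
  | symm _ ih => exact ih.symm
  | trans _ _ ih₁ ih₂ => exact ih₁.trans ih₂
  | collapse F a b x ha hb hx hxa hxb h =>
    exact glue_collapse ha hb hx hxa hxb h fun _ _ _ _ => trivial
  | iso e e' h h' he he' => exact glue_iso e e' h h' he he' fun _ _ _ _ => Iff.rfl

theorem edgeWedge_comm (F : FlagCplx) (w : F.V) (G : FlagCplx) (z : G.V) :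
    Eqv (edgeWedge F w G z) (edgeWedge G z F w) :=
  glue_comm.trans (glue_of_iff fun _ _ _ _ => and_comm)

/-- Sliding the attaching point along an edge. -/
theorem edgeWedge_slide {F : FlagCplx} {w w' : F.V} (G : FlagCplx) (z : G.V) (hw : F.r w w)
    (hw' : F.r w' w') (h : F.r w w') : Eqv (edgeWedge F w G z) (edgeWedge F w' G z) := by
  have key : ∀ {w w' : F.V}, F.r w w → F.r w' w' → F.r w w' →
      Eqv (glue F G fun u t => (u = w ∨ u = w') ∧ t = z) (edgeWedge F w G z) := by
    intro w w' hw hw' h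
    refine glue_remove (fun u t h => ⟨Or.inl h.1, h.2⟩) fun u t hu ht huc hut => Or.inl
      ⟨w, hw, ?_, fun s hs hsu hst => ⟨rfl, hsu.2⟩⟩
    rintro v hv hvu ⟨rfl | rfl, -⟩
    exacts [hw, F.symm h]
  exact (key hw hw' h).symm.trans
    ((glue_of_iff fun u t _ _ => by rw [or_comm]).trans (key hw' hw (F.symm h)))

/-- Equivalent complexes have equivalent edge wedges, for suitable attaching points. -/
def WedgeCompat (F F' : FlagCplx) : Prop :=
  ∀ w, F.r w w → ∃ w', F'.r w' w' ∧
    ∀ (G : FlagCplx) (z : G.V), Eqv (edgeWedge F w G z) (edgeWedge F' w' G z)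

theorem Eqv.wedgeCompat_aux {F F' : FlagCplx} (h : Eqv F F') :
    WedgeCompat F F' ∧ WedgeCompat F' F := by
  induction h with
  | refl F =>
    exact ⟨fun w hw => ⟨w, hw, fun _ _ => .refl _⟩, fun w hw => ⟨w, hw, fun _ _ => .refl _⟩⟩
  | symm _ ih => exact ih.symm
  | trans _ _ ih₁ ih₂ =>
    constructor
    · intro w hw
      obtain ⟨w', hw', h'⟩ := ih₁.1 w hw
      obtain ⟨w'', hw'', h''⟩ := ih₂.1 w' hw'
      exact ⟨w'', hw'', fun G z => (h' G z).trans (h'' G z)⟩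
    · intro w hw
      obtain ⟨w', hw', h'⟩ := ih₂.2 w hw
      obtain ⟨w'', hw'', h''⟩ := ih₁.2 w' hw'
      exact ⟨w'', hw'', fun G z => (h' G z).trans (h'' G z)⟩
  | collapse F a b x ha hb hx hxa hxb h =>
    have key : ∀ w, (F.del a b).r w w → ∀ (G : FlagCplx) (z : G.V),
        Eqv (edgeWedge F w G z) (edgeWedge (F.del a b) w G z) := by
      intro w hw G z
      refine glue_collapse ha hb hx hxa hxb h ?_
      rintro t ht ⟨rfl, -⟩ ⟨rfl, -⟩
      exact (hw.2 (Or.inl ⟨rfl, rfl⟩)).elim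
    refine ⟨fun w hw => ?_, fun w hw => ⟨w, hw.1, fun G z => (key w hw G z).symm⟩⟩
    by_cases hd : (F.del a b).r w w
    · exact ⟨w, hd, key w hd⟩
    · have hxd : (F.del a b).r x x := ⟨hx, by tauto⟩
      have hwx : F.r w x := by
        have : w = a ∧ w = b := by
          by_contra hc
          exact hd ⟨hw, by tauto⟩
        obtain ⟨rfl, rfl⟩ := this
        exact h w hw hw hw
      exact ⟨x, hxd, fun G z => (edgeWedge_slide G z hw hx hwx).trans (key x hxd G z)⟩
  | @iso F F' e e' h h' he he' =>
    have key : ∀ w, F.r w w → ∀ (G : FlagCplx) (z : G.V),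
        Eqv (edgeWedge F w G z) (edgeWedge F' (e w) G z) := by
      intro w hw G z
      refine glue_iso e e' h h' he he' fun u t hu ht => and_congr_left fun _ => ⟨fun hc => ?_,
        congrArg e⟩
      rw [← he u hu, hc, he w hw]
    refine ⟨fun w hw => ⟨e w, (h w w hw hw).2 hw, key w hw⟩, fun w hw => ⟨e' w, h' w hw,
      fun G z => ?_⟩⟩
    have := key (e' w) (h' w hw) G z
    rw [he' w hw] at this
    exact this.symm

theorem Eqv.wedgeCompat {F F' : FlagCplx} (h : Eqv F F') : WedgeCompat F F' := h.wedgeCompat_aux.1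

/-- Deleting vertices of `G` which are dominated by vertices of `F`. -/
lemma glue_restrict {F G : FlagCplx} {c : F.V → G.V → Prop} (P : G.V → Prop)
    (h : ∀ t, G.r t t → ¬ P t → ∃ x, F.r x x ∧ (∀ u, F.r u u → c u t → F.r u x) ∧
      ∀ s, G.r s s → G.r s t → c x s) :
    Eqv (glue F G c) (glue F (G.restrict P) c) := by
  refine Eqv.of_remove ?_ ?_
  · rintro (a | a) (b | b) ha hb hab
    exacts [hab, hab, hab, hab.1]
  · rintro (a | a) (b | b) ha hb hab hrem
    · exact (hrem.elim (fun h => h.2 ha) fun h => h.2.2 hab).elim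
    · exact (hrem.elim (fun h => by simp at h) fun h => h.2.2 hab).elim
    · exact (hrem.elim (fun h => by simp at h) fun h => h.2.2 hab).elim
    · rcases hrem with ⟨e, h'⟩ | ⟨h1, h2, h3⟩
      · obtain ⟨x, hx, h1, h2⟩ := h a ha fun hc => h' ⟨ha, hc, hc⟩
        refine ⟨.inl x, hx, ?_⟩
        rintro (u | u) hu hua hub
        · exact ⟨h1 u hu hua, fun _ => h1 u hu hua⟩
        · exact ⟨h2 u hu hua, fun _ => h2 u hu hua⟩
      · exact (h3 ⟨hab, h1.2.1, h2.2.1⟩).elim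

/-- Attaching a cone to a full subcomplex `L` dominated by a vertex `w` is wedging with the
suspension of `L`. -/
theorem cone_eqv_edgeWedge {M : FlagCplx} {L : M.V → Prop} {w : M.V}
    (hw : M.r w w) (hwL : ∀ u, L u → M.r w u) :
    Eqv (cone M L) (edgeWedge M w (susp (M.restrict L)) (.inr true)) := by
  let S := susp (M.restrict L)
  let c₀ : M.V → S.V → Prop := fun u t =>
    Sum.elim (fun t => (L u ∨ u = w) ∧ M.r u t) (fun s => L u ∨ (s = true ∧ u = w)) t
  let c₁ : M.V → S.V → Prop := fun u t =>
    Sum.elim (fun t => (L u ∨ u = w) ∧ M.r u t) (fun s => s = true ∧ (L u ∨ u = w)) t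
  let c₂ : M.V → S.V → Prop := fun u t =>
    Sum.elim (fun t => u = w ∧ L t) (fun s => s = true ∧ (L u ∨ u = w)) t
  have h₀ : Eqv (glue M S c₀) (cone M L) := by
    refine (glue_restrict (fun t => t = Sum.inr false) ?_).trans ?_
    · rintro (t | s) ht hP
      · refine ⟨t, ht.1, fun u _ hc => hc.2, ?_⟩
        rintro (s | s) hs hst
        · exact ⟨Or.inl ht.2.1, M.symm hst.1⟩
        · exact Or.inl ht.2.1
      · have hs : s = true := by
          cases s
          exacts [(hP rfl).elim, rfl]
        subst hs
        refine ⟨w, hw, ?_, ?_⟩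
        · rintro u hu (hc | ⟨-, rfl⟩)
          exacts [M.symm (hwL u hc), hw]
        · rintro (s | s) hs hst
          · exact ⟨Or.inr rfl, hwL s hs.2.1⟩
          · exact Or.inr ⟨hst, rfl⟩
    · refine Eqv.iso (F := glue M (S.restrict fun t => t = Sum.inr false) c₀) (G := cone M L)
        (Sum.map id fun _ => ()) (Sum.map id fun _ => Sum.inr false) ?_ ?_ ?_ ?_
      · rintro (a | a) (b | b) ha hb
        · exact Iff.rfl
        · obtain ⟨-, rfl, -⟩ := hb
          exact ⟨Or.inl, fun h => h.elim id fun h => by simp at h⟩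
        · obtain ⟨-, rfl, -⟩ := ha
          exact ⟨Or.inl, fun h => h.elim id fun h => by simp at h⟩
        · obtain ⟨-, rfl, -⟩ := ha
          obtain ⟨-, rfl, -⟩ := hb
          exact ⟨fun _ => ⟨rfl, rfl, rfl⟩, fun _ => trivial⟩
      · rintro (a | a) ha
        exacts [ha, ⟨rfl, rfl, rfl⟩]
      · rintro (a | a) ha
        exacts [rfl, congrArg Sum.inr ha.2.1.symm]
      · rintro (a | a) ha <;> rfl
  have h₁ : Eqv (glue M S c₀) (glue M S c₁) := by
    refine glue_remove ?_ ?_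
    · rintro u (t | s) h
      · exact h
      · obtain ⟨h1, h2 | h2⟩ := h
        exacts [Or.inl h2, Or.inr ⟨h1, h2⟩]
    · rintro u (t | s) hu ht h h'
      · exact (h' h).elim
      · cases s
        · have hLu : L u := h.elim id fun h => by simp at h
          refine Or.inr ⟨.inl u, ⟨hu, hLu, hLu⟩, ?_, ?_⟩
          · rintro v hv hvu hc
            exact ⟨Or.inl (hc.elim id fun h => by simp at h), hvu⟩
          · rintro (s | s) hs hc hst
            · exact ⟨M.symm hc.2, hs.2.1, hLu⟩
            · trivial
        · exact (h' ⟨rfl, h.imp id And.right⟩).elim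
  have h₂ : Eqv (glue M S c₁) (glue M S c₂) := by
    refine glue_remove ?_ ?_
    · rintro u (t | s) h
      · exact ⟨Or.inr h.1, h.1 ▸ hwL t h.2⟩
      · exact h
    · rintro u (t | s) hu ht h h'
      · refine Or.inl ⟨w, hw, ?_, ?_⟩
        · rintro v hv hvu ⟨hc | rfl, -⟩
          exacts [M.symm (hwL v hc), hw]
        · rintro (s | s) hs hc hst
          exacts [⟨rfl, hs.2.1⟩, ⟨hc.1, Or.inr rfl⟩]
      · exact (h' h).elim
  have h₃ : Eqv (glue M S c₂) (edgeWedge M w S (.inr true)) := by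
    refine glue_remove ?_ ?_
    · rintro u t ⟨rfl, rfl⟩
      exact ⟨rfl, Or.inr rfl⟩
    · rintro u (t | s) hu ht h h'
      · obtain ⟨rfl, -⟩ := h
        refine Or.inr ⟨.inr true, rfl, fun v hv hvu hc => ⟨hc.1, rfl⟩, ?_⟩
        rintro (s | s) hs hc hst
        exacts [trivial, hc.1]
      · obtain ⟨rfl, h⟩ := h
        have huw : u ≠ w := fun e => h' ⟨e, rfl⟩
        refine Or.inl ⟨w, hw, ?_, ?_⟩
        · rintro v hv hvu ⟨-, hc | rfl⟩
          exacts [M.symm (hwL v hc), hw]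
        · rintro (s | s) hs hc hst
          · exact (huw hc.1).elim
          · exact ⟨rfl, congrArg Sum.inr hc.1⟩
  exact h₀.symm.trans (h₁.trans (h₂.trans h₃))

/-- Extend a cross relation to a cone, with the new vertex related to nothing. -/
def coneExt {M G : FlagCplx} (C : M.V → Prop) (c : M.V → G.V → Prop) :
    (cone M C).V → G.V → Prop :=
  Sum.elim c fun _ _ => False

/-- Removing dominated vertices from the base of a cone. -/
lemma glue_cone_remove {M G : FlagCplx} {C C' : M.V → Prop} {c : M.V → G.V → Prop}
    (hC : ∀ u, C' u → C u)
    (h : ∀ y, M.r y y → C y → ¬ C' y → ∃ x, M.r x x ∧ C' x ∧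
      ∀ t, M.r t t → C t → M.r t y → M.r t x) :
    Eqv (glue (cone M C) G (coneExt C c)) (glue (cone M C') G (coneExt C' c)) := by
  have key : ∀ y, M.r y y → C y → ¬ C' y → ∃ x, glueRel (cone M C') G (coneExt C' c) x x ∧
      ∀ u, glueRel (cone M C) G (coneExt C c) u u →
        glueRel (cone M C) G (coneExt C c) u (.inl (.inl y)) →
        glueRel (cone M C) G (coneExt C c) u (.inl (.inr ())) →
        glueRel (cone M C) G (coneExt C c) u x ∧
        (glueRel (cone M C') G (coneExt C' c) u u →
          glueRel (cone M C') G (coneExt C' c) u x) := by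
    intro y hy hCy hCy'
    obtain ⟨x, hx, hCx, hxt⟩ := h y hy hCy hCy'
    refine ⟨.inl (.inl x), hx, ?_⟩
    rintro ((u | u) | u) hu h1 h2
    · exact ⟨hxt u hu h2 h1, fun _ => hxt u hu h2 h1⟩
    · exact ⟨hC x hCx, fun _ => hCx⟩
    · exact h2.elim
  refine Eqv.of_remove ?_ ?_
  · rintro ((a | a) | a) ((b | b) | b) ha hb hab
    exacts [hab, hC _ hab, hab, hC _ hab, hab, hab, hab, hab, hab]
  · rintro ((a | a) | a) ((b | b) | b) ha hb hab hrem
    · exact (hrem.elim (fun h => h.2 ha) fun h => h.2.2 hab).elim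
    · exact key a ha hab (hrem.elim (fun h => nomatch h.1) fun h => h.2.2)
    · exact (hrem.elim (fun h => nomatch h.1) fun h => h.2.2 hab).elim
    · obtain ⟨x, hx, hu⟩ := key b hb hab (hrem.elim (fun h => nomatch h.1) fun h => h.2.2)
      exact ⟨x, hx, fun u h1 h2 h3 => hu u h1 h3 h2⟩
    · exact (hrem.elim (fun h => h.2 trivial) fun h => h.2.2 trivial).elim
    · exact hab.elim
    · exact (hrem.elim (fun h => nomatch h.1) fun h => h.2.2 hab).elim
    · exact hab.elim
    · exact (hrem.elim (fun h => h.2 ha) fun h => h.2.2 hab).elim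

/-- A cone over a subcomplex which is itself a cone can be removed. -/
lemma glue_cone_absorb {M G : FlagCplx} {C : M.V → Prop} {c : M.V → G.V → Prop} {w : M.V}
    (hw : M.r w w) (hCw : C w) (h : ∀ t, M.r t t → C t → M.r t w) :
    Eqv (glue (cone M C) G (coneExt C c)) (glue M G c) := by
  let N : FlagCplx := (glue (cone M C) G (coneExt C c)).restrict
    (Sum.elim (Sum.elim (fun _ => True) fun _ => False) fun _ => True)
  have h₁ : Eqv (glue (cone M C) G (coneExt C c)) N := by
    refine Eqv.of_remove (fun a b _ _ hab => hab.1) ?_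
    intro a b ha hb hab hrem
    rcases hrem with ⟨rfl, h'⟩ | ⟨h1, h2, h3⟩
    · rcases a with (a | a) | a
      · exact (h' ⟨ha, trivial, trivial⟩).elim
      swap
      · exact (h' ⟨ha, trivial, trivial⟩).elim
      refine ⟨.inl (.inl w), ⟨hw, trivial, trivial⟩, ?_⟩
      rintro ((u | u) | u) hu h1 h2
      · exact ⟨h u hu h1, fun _ => ⟨h u hu h1, trivial, trivial⟩⟩
      · exact ⟨hCw, fun h => h.2.1.elim⟩
      · exact h1.elim
    · exact (h3 ⟨hab, h1.2.1, h2.2.1⟩).elim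
  refine h₁.trans (Eqv.symm ?_)
  refine Eqv.iso (F := glue M G c) (G := N) (Sum.map Sum.inl id)
    (fun u => Sum.elim (fun v => Sum.elim Sum.inl (fun _ => Sum.inl w) v) Sum.inr u) ?_ ?_ ?_ ?_
  · rintro (a | a) (b | b) ha hb <;>
      exact ⟨fun h => h.1, fun h => ⟨h, trivial, trivial⟩⟩
  · rintro ((u | u) | u) hu
    exacts [hu.1, hu.2.1.elim, hu.1]
  · rintro (a | a) ha <;> rfl
  · rintro ((u | u) | u) hu
    exacts [rfl, hu.2.1.elim, rfl]

/-- The full subcomplex of `K` with vertices in `B` is a cone in some complex which contains `K`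
and is equivalent to `K`, so that its inclusion in `K` is null-homotopic. -/
def NullIn (K : FlagCplx) (B : K.V → Prop) : Prop :=
  ∃ (M : FlagCplx) (i : K.V → M.V) (w : M.V), Function.Injective i ∧
    (∀ u v, M.r (i u) (i v) ↔ K.r u v) ∧ M.r w w ∧ (∀ u, K.r u u → B u → M.r (i u) w) ∧
    ∀ (G : FlagCplx) (c : K.V → G.V → Prop),
      Eqv (glue M G fun m t => ∃ u, i u = m ∧ c u t) (glue K G c)

theorem NullIn.of_apex {K : FlagCplx} {B : K.V → Prop} (w : K.V) (hw : K.r w w)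
    (h : ∀ u, K.r u u → B u → K.r u w) : NullIn K B :=
  ⟨K, id, w, Function.injective_id, fun _ _ => Iff.rfl, hw, h,
    fun G c => glue_of_iff fun u t _ _ => by simp⟩

theorem NullIn.step {K : FlagCplx} {B B₁ : K.V → Prop} (h₁ : NullIn K B₁)
    (h : ∀ y, K.r y y → B y → ¬ B₁ y → ∃ x, K.r x x ∧ B x ∧ B₁ x ∧
      ∀ t, K.r t t → B t → K.r t y → K.r t x) : NullIn K B := by
  obtain ⟨M, i, w, hi, hr, hw, hwB, hE⟩ := h₁
  let C : M.V → Prop := fun m => m = w ∨ ∃ u, K.r u u ∧ i u = m ∧ B u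
  let C' : M.V → Prop := fun m => m = w ∨ ∃ u, K.r u u ∧ i u = m ∧ B u ∧ B₁ u
  refine ⟨cone M C, Sum.inl ∘ i, .inr (), Sum.inl_injective.comp hi, hr, trivial,
    fun u hu hB => Or.inr ⟨u, hu, rfl, hB⟩, fun G c => ?_⟩
  refine (glue_of_iff (c' := coneExt C fun m t => ∃ u, i u = m ∧ c u t) ?_).trans
    ((glue_cone_remove (C' := C') ?_ ?_).trans
      ((glue_cone_absorb hw (Or.inl rfl) ?_).trans (hE G c)))
  · rintro (m | m) t - -
    · exact exists_congr fun u => and_congr_left fun _ =>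
        ⟨fun h => Sum.inl_injective h, congrArg Sum.inl⟩
    · refine ⟨?_, False.elim⟩
      rintro ⟨u, hu, -⟩
      nomatch hu
  · rintro u (rfl | ⟨u, h1, h2, h3, -⟩)
    exacts [Or.inl rfl, Or.inr ⟨u, h1, h2, h3⟩]
  · rintro y hy (rfl | ⟨u, hu, rfl, hB⟩) hy'
    · exact (hy' (Or.inl rfl)).elim
    · obtain ⟨x, hx, hBx, hBx', hxt⟩ := h u hu hB fun hB' => hy' (Or.inr ⟨u, hu, rfl, hB, hB'⟩)
      refine ⟨i x, (hr x x).2 hx, Or.inr ⟨x, hx, rfl, hBx, hBx'⟩, ?_⟩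
      rintro t ht (rfl | ⟨t, ht', rfl, hBt⟩) hty
      · exact M.symm (hwB x hx hBx')
      · exact (hr t x).2 (hxt t ht' hBt ((hr t u).1 hty))
  · rintro t ht (rfl | ⟨t, ht', rfl, -, hBt⟩)
    exacts [ht, hwB t ht' hBt]

lemma glue_nothing {F : FlagCplx} (c : F.V → nothing.V → Prop) : Eqv (glue F nothing c) F := by
  refine Eqv.iso (F := glue F nothing c) (G := F) (Sum.elim id Empty.elim) Sum.inl ?_ ?_ ?_ ?_
  · rintro (u | u) (v | v) hu hv
    exacts [Iff.rfl, v.elim, u.elim, u.elim]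
  · exact fun u hu => hu
  · rintro (u | u) hu
    exacts [rfl, u.elim]
  · exact fun u hu => rfl

/-- Attaching a cone to a full subcomplex whose inclusion is null-homotopic is wedging with its
suspension. -/
theorem NullIn.cone_eqv {K : FlagCplx} [Nonempty K.V] {B : K.V → Prop} (h : NullIn K B)
    (hB : ∀ u, B u → K.r u u) :
    ∃ w z, K.r w w ∧ (susp (K.restrict B)).r z z ∧
      Eqv (cone K B) (edgeWedge K w (susp (K.restrict B)) z) := by
  obtain ⟨M, i, w, hi, hr, hw, hwB, hE⟩ := h
  let L : M.V → Prop := fun m => ∃ u, i u = m ∧ B u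
  have h₁ : Eqv (cone K B) (edgeWedge M w (susp (M.restrict L)) (.inr true)) := by
    refine (hE point fun u _ => B u).symm.trans (cone_eqv_edgeWedge hw ?_)
    rintro m ⟨u, rfl, hu⟩
    exact M.symm (hwB u (hB u hu) hu)
  have h₂ : Eqv M K := (glue_nothing _).symm.trans ((hE nothing fun _ _ => True).trans
    (glue_nothing _))
  have h₃ : Eqv (M.restrict L) (K.restrict B) := by
    obtain ⟨j, hj⟩ := hi.hasLeftInverse
    refine Eqv.symm (Eqv.iso (F := K.restrict B) (G := M.restrict L) i j ?_ ?_ ?_ ?_)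
    · intro u v hu hv
      exact ⟨fun h => ⟨(hr u v).1 h.1, hu.2.1, hv.2.1⟩,
        fun h => ⟨(hr u v).2 h.1, ⟨u, rfl, h.2.1⟩, ⟨v, rfl, h.2.2⟩⟩⟩
    · rintro m ⟨hm, ⟨u, rfl, hu⟩, -⟩
      have : (K.restrict B).r u u := ⟨hB u hu, hu, hu⟩
      exact (hj u).symm ▸ this
    · exact fun u _ => hj u
    · rintro m ⟨hm, ⟨u, rfl, hu⟩, -⟩
      exact congrArg i (hj u)
  obtain ⟨w', hw', h₄⟩ := h₂.wedgeCompat w hw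
  obtain ⟨z, hz, h₅⟩ := (susp_congr h₃).wedgeCompat (.inr true) rfl
  exact ⟨w', z, hw', hz, h₁.trans ((h₄ _ _).trans ((edgeWedge_comm _ _ _ _).trans
    ((h₅ _ _).trans (edgeWedge_comm _ _ _ _))))⟩

/-- The relation of `bouquet`. -/
def bouquetRel {ι : Type} (d : ι → ℕ) : Option (ι × ℕ × Bool) → Option (ι × ℕ × Bool) → Prop
  | none, none => True
  | none, some q => q.2.1 ≠ 0
  | some p, none => p.2.1 ≠ 0
  | some p, some q => p.1 = q.1 ∧ p.2.1 ≤ d p.1 ∧ q.2.1 ≤ d p.1 ∧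
      (p.2.1 = q.2.1 → p.2.2 = q.2.2) ∧
      ¬ (p.2.1 = 0 ∧ p.2.2 = true) ∧ ¬ (q.2.1 = 0 ∧ q.2.2 = true)

/-- A wedge of boundaries of cross-polytopes of dimensions `d i`, for `i : ι`. The vertices of the
`i`-th one are the pairs `(k, s)` with `k ≤ d i`, where `(0, true)` is replaced by the common
base vertex `none`. -/
def bouquet {ι : Type} [Finite ι] (d : ι → ℕ) : FlagCplx where
  V := Option (ι × ℕ × Bool)
  r := bouquetRel d
  symm' := by
    rintro (_ | ⟨i, k, s⟩) (_ | ⟨j, l, t⟩) h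
    · trivial
    · exact h
    · exact h
    · obtain ⟨rfl, h1, h2, h3, h4, h5⟩ := h
      exact ⟨rfl, h2, h1, fun e => (h3 e.symm).symm, h5, h4⟩
  fin := by
    have : {p : ι × ℕ × Bool | p.2.1 ≤ d p.1}.Finite := by
      have h : (⋃ i : ι, (fun q : ℕ × Bool => (i, q)) '' (Set.Iic (d i) ×ˢ Set.univ)).Finite :=
        Set.finite_iUnion fun i => ((Set.finite_Iic _).prod Set.finite_univ).image _
      refine h.subset ?_
      rintro ⟨i, k, s⟩ hk
      exact Set.mem_iUnion.2 ⟨i, (k, s), ⟨hk, trivial⟩, rfl⟩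
    refine ((this.image some).insert none).subset ?_
    rintro (_ | p) h
    · exact Or.inl rfl
    · exact Or.inr ⟨p, h.2.1, rfl⟩

section
variable {ι κ : Type} [Finite ι] [Finite κ]

theorem susp_bouquet (d : ι → ℕ) : Eqv (susp (bouquet d)) (bouquet fun i => d i + 1) := by
  let D : FlagCplx := bouquet fun i => d i + 1
  let low : D.V → Prop := fun u => Option.elim u True fun p => p.2.1 ≤ d p.1
  let c : D.V → poles.V → Prop := fun u s => Option.elim u True fun p => p.2.1 ≤ d p.1 ∨ p.2.2 = s
  let c' : D.V → poles.V → Prop := fun u s =>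
    Option.elim u True fun p => p.2.1 = d p.1 + 1 ∧ p.2.2 = s
  have h₁ : Eqv (glue D poles c) (susp (bouquet d)) := by
    refine glue_comm.trans ((glue_restrict low ?_).trans
      (Eqv.trans ?_ (glue_comm (F := poles) (c := fun _ _ => True))))
    · rintro (_ | ⟨i, k, s⟩) ht hlow
      · exact (hlow trivial).elim
      · replace hlow : ¬ k ≤ d i := hlow
        refine ⟨s, rfl, fun u _ hc => (hc.resolve_left hlow).symm, ?_⟩
        rintro (_ | ⟨j, l, t⟩) hs hst
        · trivial
        · obtain ⟨h1, h2, h3, h4, -⟩ := hst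
          simp only at h1 h2 h3 h4
          subst h1
          by_cases hl : l ≤ d j
          · exact Or.inl hl
          · exact Or.inr (h4 (by omega))
    · refine Eqv.of_iff ?_ ?_
      · rintro (_ | (_ | ⟨i, k, s⟩))
        · exact Iff.rfl
        · exact ⟨fun _ => trivial, fun _ => ⟨trivial, trivial, trivial⟩⟩
        · exact ⟨fun ⟨h, h', _⟩ => ⟨rfl, h', h', h.2.2.2⟩,
            fun h => ⟨⟨rfl, Nat.le_succ_of_le h.2.1, Nat.le_succ_of_le h.2.1, h.2.2.2⟩,
              h.2.1, h.2.1⟩⟩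
      · rintro (_ | (_ | ⟨i, k, s⟩)) (_ | (_ | ⟨j, l, t⟩)) ha hb
        · exact Iff.rfl
        · exact iff_of_true trivial trivial
        · exact iff_of_true (Or.inl hb.2.1) trivial
        · exact iff_of_true trivial trivial
        · exact iff_of_true ⟨trivial, trivial, trivial⟩ trivial
        · exact ⟨fun h => h.1, fun h => ⟨h, trivial, hb.2.1⟩⟩
        · exact iff_of_true (Or.inl ha.2.1) trivial
        · exact ⟨fun h => h.1, fun h => ⟨h, ha.2.1, trivial⟩⟩
        · exact ⟨fun ⟨h, h', h''⟩ => ⟨h.1, h', by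
              obtain ⟨h, -⟩ := h
              simp only at h
              subst h
              exact h'', h.2.2.2⟩,
            fun h => ⟨⟨h.1, Nat.le_succ_of_le h.2.1, Nat.le_succ_of_le h.2.2.1, h.2.2.2⟩,
              ha.2.1, hb.2.1⟩⟩
  have h₂ : Eqv (glue D poles c) (glue D poles c') := by
    refine glue_remove ?_ ?_
    · rintro (_ | ⟨i, k, s⟩) t h
      exacts [trivial, Or.inr h.2]
    · rintro (_ | ⟨i, k, s⟩) t hu ht h h'
      · exact (h' trivial).elim
      · have hk : k ≤ d i := by
          have h1 : k ≤ d i + 1 := hu.2.1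
          by_contra hc
          exact h' ⟨by change k = d i + 1; omega, h.resolve_left hc⟩
        refine Or.inl ⟨some (i, d i + 1, t), ⟨rfl, le_rfl, le_rfl, fun _ => rfl, ?_, ?_⟩, ?_, ?_⟩
        · simp
        · simp
        · rintro (_ | ⟨j, l, s'⟩) hv hvu hvt
          · exact Nat.succ_ne_zero _
          · obtain ⟨h1, h2, h3, h4, h5, -⟩ := hvu
            simp only at h1 h2 h3 h4 h5
            subst h1
            refine ⟨rfl, h2, le_rfl, fun e => ?_, h5, by simp⟩
            simp only at e
            exact hvt.resolve_left (by simp only; omega)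
        · rintro s' - - rfl
          exact ⟨rfl, rfl⟩
  have h₃ : Eqv (glue D poles c') D := by
    refine (glue_restrict (fun _ => False) ?_).trans ?_
    · intro t _ _
      refine ⟨none, trivial, ?_, fun _ _ _ => trivial⟩
      rintro (_ | ⟨j, l, s'⟩) hu hc
      · trivial
      · exact ne_of_eq_of_ne hc.1 (Nat.succ_ne_zero _)
    · refine Eqv.iso (F := glue D (poles.restrict fun _ => False) c') (G := D)
        (Sum.elim id fun _ => none) Sum.inl ?_ ?_ ?_ ?_
      · rintro (u | u) (v | v) hu hv
        exacts [Iff.rfl, hv.2.1.elim, hu.2.1.elim, hu.2.1.elim]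
      · exact fun u hu => hu
      · rintro (u | u) hu
        exacts [rfl, hu.2.1.elim]
      · exact fun u hu => rfl
  exact h₁.symm.trans (h₂.trans h₃)

theorem edgeWedge_bouquet (d : ι → ℕ) (e : κ → ℕ) :
    Eqv (edgeWedge (bouquet d) none (bouquet e) none) (bouquet (Sum.elim d e)) := by
  let c : (bouquet d).V → (bouquet e).V → Prop := fun u t => u = none ∧ (bouquet e).r none t
  have h₁ : Eqv (glue (bouquet d) (bouquet e) c) (edgeWedge (bouquet d) none (bouquet e) none) := by
    refine glue_remove ?_ ?_
    · rintro u t ⟨rfl, rfl⟩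
      exact ⟨rfl, trivial⟩
    · rintro u t hu ht ⟨rfl, h⟩ h'
      refine Or.inr ⟨none, trivial, fun v hv hvu hvt => ⟨hvt.1, rfl⟩,
        fun s hs hc hst => (bouquet e).symm hc.2⟩
  have h₂ : Eqv (glue (bouquet d) (bouquet e) c)
      (glue (bouquet d) ((bouquet e).restrict fun t => t ≠ none) c) := by
    refine glue_restrict _ ?_
    intro t ht hP
    obtain rfl : t = none := by simpa using hP
    refine ⟨none, trivial, ?_, ?_⟩
    · rintro u hu ⟨rfl, -⟩
      trivial
    · exact fun s hs hst => ⟨rfl, (bouquet e).symm hst⟩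
  refine h₁.symm.trans (h₂.trans ?_)
  let f : (bouquet d).V ⊕ (bouquet e).V → (bouquet (Sum.elim d e)).V := fun u =>
    Sum.elim (fun u => u.map fun p => (Sum.inl p.1, p.2)) (fun u => u.map fun p => (Sum.inr p.1, p.2)) u
  let g : (bouquet (Sum.elim d e)).V → (bouquet d).V ⊕ (bouquet e).V := fun u =>
    Option.elim u (Sum.inl none) fun p =>
      Sum.elim (fun i => Sum.inl (some (i, p.2))) (fun i => Sum.inr (some (i, p.2))) p.1
  refine Eqv.iso (F := glue (bouquet d) ((bouquet e).restrict fun t => t ≠ none) c)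
    (G := bouquet (Sum.elim d e)) f g ?_ ?_ ?_ ?_
  · rintro ((_ | ⟨i, p⟩) | (_ | ⟨i, p⟩)) ((_ | ⟨j, q⟩) | (_ | ⟨j, q⟩)) hu hv <;>
      simp [f, glue, glueRel, bouquet, bouquetRel, restrict, c] at hu hv ⊢
  · rintro (_ | ⟨i | i, p⟩) hu
    · trivial
    · exact ⟨rfl, hu.2⟩
    · exact ⟨⟨rfl, hu.2⟩, by nofun, by nofun⟩
  · rintro ((_ | ⟨i, p⟩) | (_ | ⟨i, p⟩)) hu
    exacts [rfl, rfl, (hu.2.1 rfl).elim, rfl]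
  · rintro (_ | ⟨i | i, p⟩) hu <;> rfl

end
/-- A complex equivalent to a wedge of spheres, with `c k` spheres of dimension `k`. -/
def HasType (F : FlagCplx) (c : ℕ → ℕ) : Prop :=
  ∃ (ι : Type) (_ : Finite ι) (d : ι → ℕ), (∀ k, Nat.card {i // d i = k} = c k) ∧
    Eqv F (bouquet d)

/-- Shift a sequence by one. -/
def sh (c : ℕ → ℕ) : ℕ → ℕ
  | 0 => 0
  | k + 1 => c k

/-- The sequence with a single nonzero term, equal to one. -/
def sp (N k : ℕ) : ℕ := if k = N then 1 else 0

theorem HasType.susp {F : FlagCplx} {c : ℕ → ℕ} (h : HasType F c) : HasType (susp F) (sh c) := by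
  obtain ⟨ι, hι, d, hd, hE⟩ := h
  refine ⟨ι, hι, fun i => d i + 1, ?_, (susp_congr hE).trans (susp_bouquet d)⟩
  rintro (_ | k)
  · simp [sh]
  · simpa [sh] using hd k

lemma edgeWedge_bouquet_slide {ι : Type} [Finite ι] {d : ι → ℕ} (hd : ∀ i, d i ≠ 0)
    {w : (bouquet d).V} (hw : (bouquet d).r w w) (G : FlagCplx) (z : G.V) :
    Eqv (edgeWedge (bouquet d) w G z) (edgeWedge (bouquet d) none G z) := by
  have base : ∀ i k s, (bouquet d).r (some (i, k, s)) (some (i, k, s)) → k ≠ 0 →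
      Eqv (edgeWedge (bouquet d) (some (i, k, s)) G z) (edgeWedge (bouquet d) none G z) :=
    fun i k s hw hk => edgeWedge_slide G z hw trivial hk
  rcases w with _ | ⟨i, k, s⟩
  · exact .refl _
  · by_cases hk : k = 0
    · subst hk
      have h1 : (bouquet d).r (some (i, 1, true)) (some (i, 1, true)) :=
        ⟨rfl, Nat.one_le_iff_ne_zero.2 (hd i), Nat.one_le_iff_ne_zero.2 (hd i), fun _ => rfl,
          by simp, by simp⟩
      refine (edgeWedge_slide G z hw h1 ?_).trans (base i 1 true h1 one_ne_zero)
      exact ⟨rfl, Nat.zero_le _, Nat.one_le_iff_ne_zero.2 (hd i), by simp, hw.2.2.2.2.1, by simp⟩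
    · exact base i k s hw hk

lemma ne_zero_of_card {ι : Type} [Finite ι] {d : ι → ℕ} {c : ℕ → ℕ}
    (hd : ∀ k, Nat.card {i // d i = k} = c k) (h0 : c 0 = 0) (i : ι) : d i ≠ 0 := by
  intro h
  have h1 := hd 0
  rw [h0, Finite.card_eq_zero_iff] at h1
  exact h1.elim ⟨i, h⟩

theorem HasType.edgeWedge {F G : FlagCplx} {c c' : ℕ → ℕ} (hF : HasType F c) (hG : HasType G c')
    (h0 : c 0 = 0) (h0' : c' 0 = 0) {w : F.V} {z : G.V} (hw : F.r w w) (hz : G.r z z) :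
    HasType (edgeWedge F w G z) fun k => c k + c' k := by
  obtain ⟨ι, hι, d, hd, hE⟩ := hF
  obtain ⟨κ, hκ, e, he, hE'⟩ := hG
  obtain ⟨w', hw', h₁⟩ := hE.wedgeCompat w hw
  obtain ⟨z', hz', h₂⟩ := hE'.wedgeCompat z hz
  refine ⟨ι ⊕ κ, inferInstance, Sum.elim d e, fun k => ?_, ?_⟩
  · beta_reduce
    rw [← hd, ← he, ← Nat.card_sum]
    exact Nat.card_congr (Equiv.subtypeSum (p := fun i => Sum.elim d e i = k))
  · exact (h₁ _ _).trans ((edgeWedge_bouquet_slide (ne_zero_of_card hd h0) hw' _ _).trans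
      ((edgeWedge_comm _ _ _ _).trans ((h₂ _ _).trans
      ((edgeWedge_bouquet_slide (ne_zero_of_card he h0') hz' _ _).trans
      ((edgeWedge_comm _ _ _ _).trans (edgeWedge_bouquet d e))))))

theorem HasType.of_apex {F : FlagCplx} (x : F.V) (hx : F.r x x) (h : ∀ u, F.r u u → F.r u x) :
    HasType F 0 := by
  refine ⟨Empty, inferInstance, Empty.elim, by simp, ?_⟩
  refine Eqv.trans (G := F.restrict fun u => u = x) (Eqv.of_remove (fun a b _ _ h => h.1) ?_)
    (Eqv.iso (F := F.restrict fun u => u = x) (G := bouquet Empty.elim) (fun _ => none)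
      (fun _ => x) ?_ ?_ ?_ ?_)
  · rintro a b ha hb hab hrem
    refine ⟨x, ⟨hx, rfl, rfl⟩, fun u hu _ _ => ⟨h u hu, fun hu' => ⟨h u hu, hu'.2.1, rfl⟩⟩⟩
  · intro u v hu hv
    have hux : u = x := hu.2.1
    have hvx : v = x := hv.2.1
    rw [hux, hvx]
    exact iff_of_true trivial ⟨hx, rfl, rfl⟩
  · exact fun _ _ => ⟨hx, rfl, rfl⟩
  · exact fun u hu => hu.2.1.symm
  · rintro (_ | ⟨i, _⟩) hu
    exacts [rfl, i.elim]

theorem HasType.susp_of_empty {F : FlagCplx} (h : ∀ u, ¬ F.r u u) : HasType (FlagCplx.susp F) (sp 0) := by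
  refine ⟨Unit, inferInstance, fun _ => 0, fun k => ?_, ?_⟩
  · rcases k with _ | k <;> simp [sp]
  · refine Eqv.symm (Eqv.iso (F := bouquet fun _ : Unit => 0) (G := FlagCplx.susp F)
      (fun u => Sum.inr u.isSome)
      (fun u => Sum.elim (fun _ => none) (fun s => cond s (some ((), 0, false)) none) u) ?_ ?_ ?_ ?_)
    · rintro (_ | ⟨i, k, s⟩) (_ | ⟨j, l, t⟩) hu hv
      · exact iff_of_true rfl trivial
      · obtain rfl : l = 0 := Nat.le_zero.1 hv.2.1
        exact iff_of_false (by nofun) fun h => h rfl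
      · obtain rfl : k = 0 := Nat.le_zero.1 hu.2.1
        exact iff_of_false (by nofun) fun h => h rfl
      · obtain rfl : k = 0 := Nat.le_zero.1 hu.2.1
        obtain rfl : l = 0 := Nat.le_zero.1 hv.2.1
        have hs : s = false := by simpa using hu.2.2.2.2.1
        have ht : t = false := by simpa using hv.2.2.2.2.1
        subst hs ht
        exact iff_of_true rfl hu
    · rintro (u | (_ | _)) hu
      · exact (h u hu).elim
      · trivial
      · exact ⟨rfl, le_rfl, le_rfl, fun _ => rfl, by simp, by simp⟩
    · rintro (_ | ⟨i, k, s⟩) hu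
      · rfl
      · obtain rfl : k = 0 := Nat.le_zero.1 hu.2.1
        have hs : s = false := by simpa using hu.2.2.2.2.1
        subst hs
        rfl
    · rintro (u | (_ | _)) hu
      exacts [(h u hu).elim, rfl, rfl]

/-- The wedge type of a complex, with spheres counted by dimension plus one: the complex without
vertices is the sphere of dimension `-1`. -/
def TypeN (F : FlagCplx) (c : ℕ → ℕ) : Prop :=
  (c = sp 0 ∧ ∀ u, ¬ F.r u u) ∨ (c 0 = 0 ∧ HasType F fun k => c (k + 1))

theorem HasType.congr {F G : FlagCplx} {c : ℕ → ℕ} (h : HasType G c) (e : Eqv F G) :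
    HasType F c := by
  obtain ⟨ι, hι, d, hd, hE⟩ := h
  exact ⟨ι, hι, d, hd, e.trans hE⟩

theorem TypeN.susp {F : FlagCplx} {c : ℕ → ℕ} (h : TypeN F c) : TypeN (susp F) (sh c) := by
  refine Or.inr ⟨rfl, ?_⟩
  change HasType _ c
  rcases h with ⟨rfl, h⟩ | ⟨h0, h⟩
  · exact HasType.susp_of_empty h
  · convert h.susp using 1
    funext k
    rcases k with _ | k
    exacts [h0, rfl]

theorem TypeN.of_apex {F : FlagCplx} (x : F.V) (hx : F.r x x) (h : ∀ u, F.r u u → F.r u x) :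
    TypeN F 0 :=
  Or.inr ⟨rfl, HasType.of_apex x hx h⟩

theorem TypeN.hasType {F : FlagCplx} {c : ℕ → ℕ} (h : TypeN F c) (h0 : c 0 = 0) :
    HasType F fun k => c (k + 1) := by
  rcases h with ⟨rfl, -⟩ | h
  · simp [sp] at h0
  · exact h.2

theorem TypeN.cone {K : FlagCplx} [Nonempty K.V] {B : K.V → Prop} {c c' : ℕ → ℕ} (hK : TypeN K c)
    (hB : TypeN (K.restrict B) c') (h0 : c 0 = 0) (h1 : c 1 = 0) (h0' : c' 0 = 0)
    (hn : NullIn K B) (hBK : ∀ u, B u → K.r u u) : TypeN (cone K B) fun k => c k + sh c' k := by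
  obtain ⟨w, z, hw, hz, hE⟩ := hn.cone_eqv hBK
  refine Or.inr ⟨by simp [h0, sh], HasType.congr ?_ hE⟩
  convert (hK.hasType h0).edgeWedge (hB.hasType h0').susp h1 rfl hw hz using 3 with k
  rcases k with _ | k
  exacts [h0', rfl]

/-- Adjacency in the grid, for points with third coordinate at most one. -/
def gadj (i j l i' j' l' : ℕ) : Prop :=
  (i = i' ∧ j = j' ∧ l ≠ l') ∨ (i = i' ∧ l = l' ∧ (j = j' + 1 ∨ j' = j + 1)) ∨
    (j = j' ∧ l = l' ∧ (i = i' + 1 ∨ i' = i + 1))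

lemma gadj_comm {i j l i' j' l' : ℕ} : gadj i j l i' j' l' ↔ gadj i' j' l' i j l := by
  unfold gadj
  omega

/-- The points of the `n × 3 × 2` grid which lie in `S`. -/
def inGrid (n : ℕ) (S : ℕ → ℕ → ℕ → Prop) (a : ℕ × ℕ × ℕ) : Prop :=
  a.1 < n ∧ a.2.1 < 3 ∧ a.2.2 < 2 ∧ S a.1 a.2.1 a.2.2

/-- The independence complex of the subgraph of the `n × 3 × 2` grid induced on `S`. -/
def grid (n : ℕ) (S : ℕ → ℕ → ℕ → Prop) : FlagCplx where
  V := ℕ × ℕ × ℕ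
  r a b := inGrid n S a ∧ inGrid n S b ∧ ¬ gadj a.1 a.2.1 a.2.2 b.1 b.2.1 b.2.2
  symm' _ _ h := ⟨h.2.1, h.1, fun h' => h.2.2 (gadj_comm.1 h')⟩
  fin := by
    refine ((Set.finite_Iio n).prod ((Set.finite_Iio 3).prod (Set.finite_Iio 2))).subset ?_
    rintro ⟨i, j, l⟩ ⟨⟨h1, h2, h3, -⟩, -⟩
    exact ⟨h1, h2, h3⟩

instance (n : ℕ) (S : ℕ → ℕ → ℕ → Prop) : Nonempty (grid n S).V :=
  inferInstanceAs (Nonempty (ℕ × ℕ × ℕ))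

lemma grid_diag {n : ℕ} {S : ℕ → ℕ → ℕ → Prop} {a : ℕ × ℕ × ℕ} :
    (grid n S).r a a ↔ inGrid n S a :=
  ⟨fun h => h.1, fun h => ⟨h, h, by unfold gadj; omega⟩⟩

theorem TypeN.congr {F G : FlagCplx} {c : ℕ → ℕ} (h : TypeN G c) (e : Eqv F G)
    (hv : (∀ u, ¬ G.r u u) → ∀ u, ¬ F.r u u) : TypeN F c := by
  rcases h with ⟨hc, h⟩ | ⟨h0, h⟩
  · exact Or.inl ⟨hc, hv h⟩
  · exact Or.inr ⟨h0, h.congr e⟩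

section
variable {n : ℕ} {S S' : ℕ → ℕ → ℕ → Prop} {c c' : ℕ → ℕ}

/-- Deleting dominated points. The list consists of pairs of a point and one dominating it. -/
theorem TypeN.fold (h : TypeN (grid n S') c) (W : List ((ℕ × ℕ × ℕ) × ℕ × ℕ × ℕ))
    (hsub : ∀ i j l, i < n → j < 3 → l < 2 → S' i j l → S i j l)
    (hcov : ∀ i j l, i < n → j < 3 → l < 2 → S i j l → ¬ S' i j l → (i, j, l) ∈ W.map Prod.fst)
    (hdom : ∀ p ∈ W, inGrid n S p.1 → inGrid n S' p.2 ∧ ∀ i j l, i < n → j < 3 → l < 2 →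
      S i j l → gadj i j l p.2.1 p.2.2.1 p.2.2.2 → gadj i j l p.1.1 p.1.2.1 p.1.2.2) :
    TypeN (grid n S) c := by
  have key : ∀ a, inGrid n S a → ¬ inGrid n S' a → ∃ x, inGrid n S' x ∧ ∀ u, inGrid n S u →
      ¬ gadj u.1 u.2.1 u.2.2 a.1 a.2.1 a.2.2 → ¬ gadj u.1 u.2.1 u.2.2 x.1 x.2.1 x.2.2 := by
    intro a ha ha'
    obtain ⟨p, hp, hpa⟩ := List.mem_map.1 (hcov _ _ _ ha.1 ha.2.1 ha.2.2.1 ha.2.2.2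
      fun h => ha' ⟨ha.1, ha.2.1, ha.2.2.1, h⟩)
    obtain rfl : p.1 = a := hpa
    obtain ⟨hx, hd⟩ := hdom p hp ha
    exact ⟨p.2, hx, fun u hu h h' => h (hd _ _ _ hu.1 hu.2.1 hu.2.2.1 hu.2.2.2 h')⟩
  have hsub' : ∀ a, inGrid n S' a → inGrid n S a := fun a ha =>
    ⟨ha.1, ha.2.1, ha.2.2.1, hsub _ _ _ ha.1 ha.2.1 ha.2.2.1 ha.2.2.2⟩
  refine h.congr (Eqv.of_remove ?_ ?_) ?_
  · exact fun a b _ _ h => ⟨hsub' a h.1, hsub' b h.2.1, h.2.2⟩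
  · rintro a b ha hb hab (⟨rfl, h'⟩ | ⟨h1, h2, h3⟩)
    · obtain ⟨x, hx, hd⟩ := key a ha.1 fun h => h' (grid_diag.2 h)
      refine ⟨x, grid_diag.2 hx, fun u hu hua _ => ⟨⟨hu.1, hsub' x hx, hd u hu.1 hua.2.2⟩,
        fun hu' => ⟨hu'.1, hx, hd u hu.1 hua.2.2⟩⟩⟩
    · exact (h3 ⟨h1.1, h2.1, hab.2.2⟩).elim
  · intro hempty u hu
    by_cases h' : inGrid n S' u
    · exact hempty u (grid_diag.2 h')
    · obtain ⟨x, hx, -⟩ := key u hu.1 h'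
      exact hempty x (grid_diag.2 hx)

/-- A component consisting of a single edge gives a suspension. -/
theorem TypeN.edge (h : TypeN (grid n S') c) (p q : ℕ × ℕ × ℕ)
    (hp : inGrid n S p) (hq : inGrid n S q)
    (hpq : gadj p.1 p.2.1 p.2.2 q.1 q.2.1 q.2.2)
    (hS : ∀ i j l, i < n → j < 3 → l < 2 → (S' i j l ↔ S i j l ∧
      ¬ (i = p.1 ∧ j = p.2.1 ∧ l = p.2.2) ∧ ¬ (i = q.1 ∧ j = q.2.1 ∧ l = q.2.2)))
    (hadj : ∀ i j l, i < n → j < 3 → l < 2 → S' i j l →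
      ¬ gadj i j l p.1 p.2.1 p.2.2 ∧ ¬ gadj i j l q.1 q.2.1 q.2.2) :
    TypeN (grid n S) (sh c) := by
  classical
  have hne : p ≠ q := by
    rintro rfl
    unfold gadj at hpq
    omega
  have hS' : ∀ a, inGrid n S' a ↔ inGrid n S a ∧ a ≠ p ∧ a ≠ q := by
    rintro ⟨i, j, l⟩
    obtain ⟨p1, p2, p3⟩ := p
    obtain ⟨q1, q2, q3⟩ := q
    constructor
    · rintro ⟨h1, h2, h3, h4⟩
      obtain ⟨h5, h6, h7⟩ := (hS i j l h1 h2 h3).1 h4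
      exact ⟨⟨h1, h2, h3, h5⟩, by simpa using h6, by simpa using h7⟩
    · rintro ⟨⟨h1, h2, h3, h4⟩, h6, h7⟩
      exact ⟨h1, h2, h3, (hS i j l h1 h2 h3).2 ⟨h4, by simpa using h6, by simpa using h7⟩⟩
  have hna : ∀ a, inGrid n S' a → ¬ gadj a.1 a.2.1 a.2.2 p.1 p.2.1 p.2.2 ∧
      ¬ gadj a.1 a.2.1 a.2.2 q.1 q.2.1 q.2.2 :=
    fun a ha => hadj _ _ _ ha.1 ha.2.1 ha.2.2.1 ha.2.2.2
  have hE : Eqv (FlagCplx.susp (grid n S')) (grid n S) := by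
    obtain ⟨e, ep, eq, ea⟩ : ∃ e : ℕ × ℕ × ℕ → (ℕ × ℕ × ℕ) ⊕ Bool, e p = .inr true ∧
        e q = .inr false ∧ ∀ a, a ≠ p → a ≠ q → e a = .inl a :=
      ⟨fun a => if a = p then .inr true else if a = q then .inr false else .inl a,
        by simp, by simp [hne.symm], fun a h1 h2 => by simp [h1, h2]⟩
    have hdiag : ∀ a x, e a = x → (FlagCplx.susp (grid n S')).r x x →
        (FlagCplx.susp (grid n S')).r (e a) (e a) := by
      rintro a _ rfl h
      exact h
    refine Eqv.iso (F := FlagCplx.susp (grid n S')) (G := grid n S)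
      (fun u => Sum.elim id (fun s => cond s p q) u) e ?_ ?_ ?_ ?_
    · rintro (a | (_ | _)) (b | (_ | _)) ha hb
      · exact ⟨fun h => ⟨ha.1, hb.1, h.2.2⟩, fun h => ⟨((hS' a).1 h.1).1, ((hS' b).1 h.2.1).1, h.2.2⟩⟩
      · exact iff_of_true ⟨((hS' a).1 ha.1).1, hq, (hna a ha.1).2⟩ trivial
      · exact iff_of_true ⟨((hS' a).1 ha.1).1, hp, (hna a ha.1).1⟩ trivial
      · exact iff_of_true ⟨hq, ((hS' b).1 hb.1).1, fun h => (hna b hb.1).2 (gadj_comm.1 h)⟩ trivial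
      · exact iff_of_true (grid_diag.2 hq) rfl
      · exact iff_of_false (fun h => h.2.2 (gadj_comm.1 hpq)) (by nofun)
      · exact iff_of_true ⟨hp, ((hS' b).1 hb.1).1, fun h => (hna b hb.1).1 (gadj_comm.1 h)⟩ trivial
      · exact iff_of_false (fun h => h.2.2 hpq) (by nofun)
      · exact iff_of_true (grid_diag.2 hp) rfl
    · intro a ha
      by_cases h1 : a = p
      · exact hdiag a (.inr true) (h1 ▸ ep) rfl
      by_cases h2 : a = q
      · exact hdiag a (.inr false) (h2 ▸ eq) rfl
      · exact hdiag a _ (ea a h1 h2) (grid_diag.2 ((hS' a).2 ⟨ha.1, h1, h2⟩))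
    · rintro (a | (_ | _)) ha
      · exact ea a ((hS' a).1 ha.1).2.1 ((hS' a).1 ha.1).2.2
      · exact eq
      · exact ep
    · intro a ha
      change Sum.elim id (fun s => cond s p q) (e a) = a
      by_cases h1 : a = p
      · rw [h1, ep]
        rfl
      by_cases h2 : a = q
      · rw [h2, eq]
        rfl
      · rw [ea a h1 h2]
        rfl
  exact h.susp.congr hE.symm fun h => (h (.inr true) rfl).elim

theorem TypeN.of_isolated (x : ℕ × ℕ × ℕ) (hx : inGrid n S x)
    (h : ∀ i j l, i < n → j < 3 → l < 2 → S i j l → ¬ gadj i j l x.1 x.2.1 x.2.2) :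
    TypeN (grid n S) 0 :=
  TypeN.of_apex (F := grid n S) x (grid_diag.2 hx) fun _ hu =>
    ⟨hu.1, hx, h _ _ _ hu.1.1 hu.1.2.1 hu.1.2.2.1 hu.1.2.2.2⟩

theorem TypeN.of_empty (h : ∀ i j l, i < n → j < 3 → l < 2 → ¬ S i j l) :
    TypeN (grid n S) (sp 0) :=
  Or.inl ⟨rfl, fun _ hu => h _ _ _ hu.1.1 hu.1.2.1 hu.1.2.2.1 hu.1.2.2.2⟩

/-- The inclusion of the independence complex on `B` in that on `A` is null-homotopic. -/
def Null (n : ℕ) (A B : ℕ → ℕ → ℕ → Prop) : Prop := NullIn (grid n A) (inGrid n B)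

theorem TypeN.split {A B : ℕ → ℕ → ℕ → Prop} (v : ℕ × ℕ × ℕ) (hv : inGrid n S v)
    (hA : ∀ i j l, i < n → j < 3 → l < 2 → (A i j l ↔ S i j l ∧
      ¬ (i = v.1 ∧ j = v.2.1 ∧ l = v.2.2)))
    (hB : ∀ i j l, i < n → j < 3 → l < 2 → (B i j l ↔ A i j l ∧ ¬ gadj i j l v.1 v.2.1 v.2.2))
    (hcA : TypeN (grid n A) c) (hcB : TypeN (grid n B) c') (h0 : c 0 = 0) (h1 : c 1 = 0)
    (h0' : c' 0 = 0) (hn : Null n A B) : TypeN (grid n S) fun k => c k + sh c' k := by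
  classical
  have hA' : ∀ a, inGrid n A a ↔ inGrid n S a ∧ a ≠ v := by
    rintro ⟨i, j, l⟩
    obtain ⟨v1, v2, v3⟩ := v
    constructor
    · rintro ⟨h1, h2, h3, h4⟩
      obtain ⟨h5, h6⟩ := (hA i j l h1 h2 h3).1 h4
      exact ⟨⟨h1, h2, h3, h5⟩, by simpa using h6⟩
    · rintro ⟨⟨h1, h2, h3, h4⟩, h6⟩
      exact ⟨h1, h2, h3, (hA i j l h1 h2 h3).2 ⟨h4, by simpa using h6⟩⟩
  have hB' : ∀ a, inGrid n B a ↔ inGrid n A a ∧ ¬ gadj a.1 a.2.1 a.2.2 v.1 v.2.1 v.2.2 := by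
    intro a
    constructor
    · rintro ⟨h1, h2, h3, h4⟩
      obtain ⟨h5, h6⟩ := (hB _ _ _ h1 h2 h3).1 h4
      exact ⟨⟨h1, h2, h3, h5⟩, h6⟩
    · rintro ⟨⟨h1, h2, h3, h4⟩, h6⟩
      exact ⟨h1, h2, h3, (hB _ _ _ h1 h2 h3).2 ⟨h4, h6⟩⟩
  have hE : Eqv (FlagCplx.cone (grid n A) (inGrid n B)) (grid n S) := by
    obtain ⟨e, ev, ea⟩ : ∃ e : ℕ × ℕ × ℕ → (ℕ × ℕ × ℕ) ⊕ Unit, e v = .inr () ∧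
        ∀ a, a ≠ v → e a = .inl a :=
      ⟨fun a => if a = v then .inr () else .inl a, by simp, fun a h1 => by simp [h1]⟩
    have hdiag : ∀ a x, e a = x → (FlagCplx.cone (grid n A) (inGrid n B)).r x x →
        (FlagCplx.cone (grid n A) (inGrid n B)).r (e a) (e a) := by
      rintro a _ rfl h
      exact h
    refine Eqv.iso (F := FlagCplx.cone (grid n A) (inGrid n B)) (G := grid n S)
      (fun u => Sum.elim id (fun _ => v) u) e ?_ ?_ ?_ ?_
    · rintro (a | _) (b | _) ha hb
      · exact ⟨fun h => ⟨ha.1, hb.1, h.2.2⟩, fun h => ⟨((hA' a).1 h.1).1, ((hA' b).1 h.2.1).1, h.2.2⟩⟩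
      · exact ⟨fun h => (hB' a).2 ⟨ha.1, h.2.2⟩, fun h => ⟨((hA' a).1 ha.1).1, hv,
          ((hB' a).1 h).2⟩⟩
      · exact ⟨fun h => (hB' b).2 ⟨hb.1, fun h' => h.2.2 (gadj_comm.1 h')⟩,
          fun h => ⟨hv, ((hA' b).1 hb.1).1, fun h' => ((hB' b).1 h).2 (gadj_comm.1 h')⟩⟩
      · exact iff_of_true (grid_diag.2 hv) trivial
    · intro a ha
      by_cases h1 : a = v
      · exact hdiag a (.inr ()) (h1 ▸ ev) trivial
      · exact hdiag a _ (ea a h1) (grid_diag.2 ((hA' a).2 ⟨ha.1, h1⟩))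
    · rintro (a | _) ha
      · exact ea a ((hA' a).1 ha.1).2
      · exact ev
    · intro a ha
      change Sum.elim id (fun _ => v) (e a) = a
      by_cases h1 : a = v
      · rw [h1, ev]
        rfl
      · rw [ea a h1]
        rfl
  have hR : TypeN ((grid n A).restrict (inGrid n B)) c' := by
    refine hcB.congr (Eqv.of_iff ?_ ?_) ?_
    · exact fun a => ⟨fun h => grid_diag.2 h.2.1,
        fun h => ⟨grid_diag.2 ((hB' a).1 h.1).1, h.1, h.1⟩⟩
    · exact fun a b ha hb => ⟨fun h => ⟨h.2.1, h.2.2, h.1.2.2⟩,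
        fun h => ⟨⟨((hB' a).1 h.1).1, ((hB' b).1 h.2.1).1, h.2.2⟩, h.1, h.2.1⟩⟩
    · exact fun h u hu => h u (grid_diag.2 hu.2.1)
  refine (TypeN.cone hcA hR h0 h1 h0' hn fun u hu => grid_diag.2 ((hB' u).1 hu).1).congr hE.symm ?_
  exact fun h => (h (.inr ()) trivial).elim

variable {A J P P₁ Jm Am : ℕ → ℕ → ℕ → Prop}

theorem Null.of_apex (w₁ w₂ w₃ : ℕ) (hw : w₁ < n ∧ w₂ < 3 ∧ w₃ < 2) (hA : A w₁ w₂ w₃)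
    (hJ : ∀ i j l, J i j l → Jm i j l)
    (h : ∀ i j l, i < n → j < 3 → l < 2 → Jm i j l ∨ P i j l → ¬ gadj i j l w₁ w₂ w₃) :
    Null n A fun i j l => J i j l ∨ P i j l :=
  have hw' : inGrid n A (w₁, w₂, w₃) := ⟨hw.1, hw.2.1, hw.2.2, hA⟩
  NullIn.of_apex (K := grid n A) (w₁, w₂, w₃) (grid_diag.2 hw') fun _ hu hB =>
    ⟨hu.1, hw', h _ _ _ hB.1 hB.2.1 hB.2.2.1 (hB.2.2.2.imp_left (hJ _ _ _))⟩

/-- Replacing the explicit part `P` of the subcomplex by `P₁`, when the points lost are dominated;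
`Jm` bounds the remaining part `J`, and `Am` consists of points which are known to be available. -/
theorem Null.step (h : Null n A fun i j l => J i j l ∨ P₁ i j l)
    (W : List ((ℕ × ℕ × ℕ) × ℕ × ℕ × ℕ))
    (hJ : ∀ i j l, J i j l → Jm i j l)
    (hA : ∀ i j l, i < n → j < 3 → l < 2 → Am i j l → A i j l)
    (hcov : ∀ i j l, i < n → j < 3 → l < 2 → P i j l → ¬ P₁ i j l → (i, j, l) ∈ W.map Prod.fst)
    (hdom : ∀ p ∈ W, inGrid n P p.1 → (inGrid n P p.2 ∧ inGrid n P₁ p.2 ∧ inGrid n Am p.2) ∧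
      ∀ i j l, i < n → j < 3 → l < 2 → Jm i j l ∨ P i j l →
        gadj i j l p.2.1 p.2.2.1 p.2.2.2 → gadj i j l p.1.1 p.1.2.1 p.1.2.2) :
    Null n A fun i j l => J i j l ∨ P i j l := by
  refine NullIn.step h ?_
  intro y hy hP hP₁
  have hPy : P y.1 y.2.1 y.2.2 := hP.2.2.2.resolve_left fun hJ =>
    hP₁ ⟨hP.1, hP.2.1, hP.2.2.1, Or.inl hJ⟩
  obtain ⟨p, hp, hpa⟩ := List.mem_map.1 (hcov _ _ _ hP.1 hP.2.1 hP.2.2.1 hPy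
    fun h => hP₁ ⟨hP.1, hP.2.1, hP.2.2.1, Or.inr h⟩)
  obtain rfl : p.1 = y := hpa
  obtain ⟨⟨h1, h2, h3⟩, h4⟩ := hdom p hp ⟨hP.1, hP.2.1, hP.2.2.1, hPy⟩
  have hAx : inGrid n A p.2 := ⟨h3.1, h3.2.1, h3.2.2.1, hA _ _ _ h3.1 h3.2.1 h3.2.2.1 h3.2.2.2⟩
  refine ⟨p.2, grid_diag.2 hAx, ⟨h1.1, h1.2.1, h1.2.2.1, Or.inr h1.2.2.2⟩,
    ⟨h2.1, h2.2.1, h2.2.2.1, Or.inr h2.2.2.2⟩, fun t ht hBt hty => ⟨ht.1, hAx, fun h' => ?_⟩⟩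
  exact hty.2.2 (h4 _ _ _ hBt.1 hBt.2.1 hBt.2.2.1 (hBt.2.2.2.imp_left (hJ _ _ _)) h')

end
lemma sh_sp (N : ℕ) : sh (sp N) = sp (N + 1) := by
  funext k
  rcases k with _ | k <;> simp [sh, sp]

lemma sh_zero : sh 0 = 0 := by
  funext k
  rcases k with _ | k <;> rfl

theorem TypeN.addEdge {n : ℕ} {S : ℕ → ℕ → ℕ → Prop} {c : ℕ → ℕ} (h : TypeN (grid n S) c)
    (p₁ p₂ p₃ q₁ q₂ q₃ : ℕ) (hp : p₁ < n ∧ p₂ < 3 ∧ p₃ < 2) (hq : q₁ < n ∧ q₂ < 3 ∧ q₃ < 2)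
    (hpq : gadj p₁ p₂ p₃ q₁ q₂ q₃)
    (hadj : ∀ i j l, i < n → j < 3 → l < 2 → S i j l →
      ¬ gadj i j l p₁ p₂ p₃ ∧ ¬ gadj i j l q₁ q₂ q₃) :
    TypeN (grid n fun i j l => S i j l ∨ (i = p₁ ∧ j = p₂ ∧ l = p₃) ∨ (i = q₁ ∧ j = q₂ ∧ l = q₃))
      (sh c) := by
  have hSp : ¬ S p₁ p₂ p₃ := fun h => (hadj _ _ _ hp.1 hp.2.1 hp.2.2 h).2 hpq
  have hSq : ¬ S q₁ q₂ q₃ := fun h => (hadj _ _ _ hq.1 hq.2.1 hq.2.2 h).1 (gadj_comm.1 hpq)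
  refine h.edge (p₁, p₂, p₃) (q₁, q₂, q₃) ⟨hp.1, hp.2.1, hp.2.2, Or.inr (Or.inl ⟨rfl, rfl, rfl⟩)⟩
    ⟨hq.1, hq.2.1, hq.2.2, Or.inr (Or.inr ⟨rfl, rfl, rfl⟩)⟩ hpq ?_ hadj
  intro i j l _ _ _
  constructor
  · intro h
    refine ⟨Or.inl h, ?_, ?_⟩
    · rintro ⟨rfl, rfl, rfl⟩
      exact hSp h
    · rintro ⟨rfl, rfl, rfl⟩
      exact hSq h
  · rintro ⟨h1 | h1 | h1, h2, h3⟩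
    exacts [h1, (h2 h1).elim, (h3 h1).elim]

/-- The layers from `k` on, with only the middle column of layer `k`. -/
def stT (k i j _l : ℕ) : Prop := k ≤ i ∧ (i = k → j = 1)

/-- The layers from `k` on, without the middle column of layer `k`. -/
def stU (k i j _l : ℕ) : Prop := k ≤ i ∧ (i = k → j ≠ 1)

/-- The layers from `k` on, with an independent triple in layer `k`. -/
def stQ (k a i j l : ℕ) : Prop := k ≤ i ∧ (i = k → (j = 1 ↔ l ≠ a))

/-- The layers from `k` on, without two points of layer `k` and one of layer `k + 1`. -/
def stX (k a i j l : ℕ) : Prop :=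
  k ≤ i ∧ (i = k → l ≠ a → j = 1) ∧ (i = k + 1 → l = a → j ≠ 1)

/-- The layers from `k` on, without one point of layer `k` and two of layer `k + 1`. -/
def stY (k a i j l : ℕ) : Prop :=
  k ≤ i ∧ (i = k → l = a → j ≠ 1) ∧ (i = k + 1 → l ≠ a → j = 1)

theorem typeN_T_U {n : ℕ} (m : ℕ) : ∀ k, k + m = n → TypeN (grid n (stT k)) (sp (3 * m / 2)) ∧
    TypeN (grid n (stU k)) (sp ((3 * m + 1) / 2)) := by
  induction m with
  | zero =>
    intro k hk
    constructor <;> refine TypeN.of_empty ?_ <;> intro i j l <;> simp only [stT, stU] <;> omega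
  | succ m ih =>
    intro k hk
    obtain ⟨hT, hU⟩ := ih (k + 1) (by omega)
    constructor
    · have h := hU.addEdge k 1 0 k 1 1 (by omega) (by omega) (by unfold gadj; omega)
        (by simp only [stU, gadj]; grind)
      rw [sh_sp, show (3 * m + 1) / 2 + 1 = 3 * (m + 1) / 2 by omega] at h
      refine h.fold [((k + 1, 1, 0), (k, 1, 1)), ((k + 1, 1, 1), (k, 1, 0))] ?_ ?_ ?_
      · simp only [stT, stU]
        grind
      · simp only [stT, stU, List.map, List.mem_cons, Prod.mk.injEq, List.not_mem_nil, or_false]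
        grind
      · simp only [stT, stU, inGrid, gadj, List.forall_mem_cons, List.not_mem_nil, false_imp_iff, implies_true, and_true]
        and_intros <;> grind (splits := 20)
    · have h := (hT.addEdge k 0 0 k 0 1 (by omega) (by omega) (by unfold gadj; omega)
        (by simp only [stT, gadj]; grind)).addEdge k 2 0 k 2 1 (by omega) (by omega)
        (by unfold gadj; omega) (by simp only [stT, gadj]; grind)
      rw [sh_sp, sh_sp, show 3 * m / 2 + 1 + 1 = (3 * (m + 1) + 1) / 2 by omega] at h
      refine h.fold [((k + 1, 0, 0), (k, 0, 1)), ((k + 1, 0, 1), (k, 0, 0)),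
        ((k + 1, 2, 0), (k, 2, 1)), ((k + 1, 2, 1), (k, 2, 0))] ?_ ?_ ?_
      · simp only [stT, stU]
        grind
      · simp only [stT, stU, List.map, List.mem_cons, Prod.mk.injEq, List.not_mem_nil, or_false]
        grind
      · simp only [stT, stU, inGrid, gadj, List.forall_mem_cons, List.not_mem_nil, false_imp_iff, implies_true, and_true]
        and_intros <;> grind (splits := 20)



theorem typeN_triple {n k a b : ℕ} {c : ℕ → ℕ} (hab : a + b = 1) (hk : k + 2 ≤ n)
    (h : TypeN (grid n (stQ (k + 2) b)) c) :
    TypeN (grid n fun i j l => k ≤ i ∧ (i ≤ k + 1 → (j = 1 ↔ l ≠ a)) ∧ (i = k + 2 → (j = 1 ↔ l ≠ b)))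
      (sh (sh (sh c))) := by
  have h' := ((h.addEdge k 0 a (k + 1) 0 a (by omega) (by omega) (by unfold gadj; omega)
    (by simp only [stQ, gadj]; grind)).addEdge k 1 b (k + 1) 1 b (by omega) (by omega)
    (by unfold gadj; omega) (by simp only [stQ, gadj]; grind)).addEdge k 2 a (k + 1) 2 a (by omega)
    (by omega) (by unfold gadj; omega) (by simp only [stQ, gadj]; grind)
  refine h'.fold [] ?_ ?_ (by simp)
  · simp only [stQ]
    grind
  · simp only [stQ, List.map, List.not_mem_nil]
    grind

/-- The number of spheres of each dimension plus one, for `stQ` with `m` layers. -/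
def qc (m : ℕ) : ℕ → ℕ := if m % 2 = 0 then sp (3 * m / 2) else 0

lemma sh_qc (m : ℕ) : sh (sh (sh (qc m))) = qc (m + 2) := by
  unfold qc
  split_ifs with h1 h2 h2
  · rw [sh_sp, sh_sp, sh_sp, show 3 * m / 2 + 1 + 1 + 1 = 3 * (m + 2) / 2 by omega]
  · omega
  · omega
  · rw [sh_zero, sh_zero, sh_zero]

theorem typeN_Q {n : ℕ} : ∀ m k a b, a + b = 1 → k + m = n → TypeN (grid n (stQ k a)) (qc m)
  | 0, k, a, b, hab, hk => by
    refine TypeN.of_empty ?_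
    simp only [stQ]
    grind
  | 1, k, a, b, hab, hk => by
    refine TypeN.of_isolated (k, 0, a) ?_ ?_
    · simp only [inGrid, stQ]
      grind
    · simp only [gadj, stQ]
      grind
  | m + 2, k, a, b, hab, hk => by
    have h := typeN_triple (n := n) (k := k) hab (by omega) (typeN_Q m (k + 2) b a (by omega) (by omega))
    rw [sh_qc] at h
    refine h.fold [((k + 1, 0, b), (k, 0, a)), ((k + 2, 0, a), (k, 0, a)),
      ((k + 1, 2, b), (k, 2, a)), ((k + 2, 2, a), (k, 2, a)),
      ((k + 1, 1, a), (k, 1, b)), ((k + 2, 1, b), (k, 1, b))] ?_ ?_ ?_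
    · simp only [stQ]
      grind
    · simp only [stQ, List.map, List.mem_cons, Prod.mk.injEq, List.not_mem_nil, or_false]
      grind
    · simp only [stQ, inGrid, gadj, List.forall_mem_cons, List.not_mem_nil, false_imp_iff,
        implies_true, and_true]
      and_intros <;> grind (splits := 20)

section
variable {n : ℕ} {A J E P P₁ : ℕ → ℕ → ℕ → Prop}

lemma Null.assoc (h : Null n A fun i j l => (J i j l ∨ E i j l) ∨ P i j l) :
    Null n A fun i j l => J i j l ∨ (E i j l ∨ P i j l) := by
  simpa only [or_assoc] using h

lemma Null.mono (h : Null n A fun i j l => J i j l ∨ P₁ i j l)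
    (hP : ∀ i j l, i < n → j < 3 → l < 2 → P i j l → P₁ i j l) :
    Null n A fun i j l => J i j l ∨ P i j l :=
  h.step (Jm := J) (Am := A) [] (fun _ _ _ h => h) (fun _ _ _ _ _ _ h => h)
    (fun i j l h1 h2 h3 h h' => (h' (hP i j l h1 h2 h3 h)).elim) (by simp)

end

theorem null_X {n : ℕ} {A : ℕ → ℕ → ℕ → Prop} : ∀ (m k a b : ℕ) (J : ℕ → ℕ → ℕ → Prop),
    a + b = 1 → k + 1 + m = n → (∀ i j l, J i j l → i + 1 ≤ k ∧ (i + 1 = k → j ≠ 1)) →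
    (∀ i j l, i < n → j < 3 → l < 2 → (i = k ∧ j = 1) ∨ k + 1 ≤ i → A i j l) →
    Null n A fun i j l => J i j l ∨ stX (k + 1) a i j l
  | 0, k, a, b, J, hab, hk, hJ, hA => by
    refine Null.of_apex k 1 0 (by omega) (hA _ _ _ (by omega) (by omega) (by omega)
      (by omega)) hJ ?_
    · simp only [stX, gadj]
      grind
  | m + 1, k, a, b, J, hab, hk, hJ, hA => by
    let P₂ (i j l : ℕ) : Prop := (k + 1 ≤ i ∧ (i = k + 1 → (j = 1 ↔ l = b)) ∧ (i = k + 2 → j ≠ 1)) ∨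
      (i = k ∧ j = 1 ∧ l = b)
    suffices h : Null n A fun i j l => J i j l ∨ P₂ i j l by
      refine Null.mono (P₁ := fun i j l => stX (k + 1) a i j l ∨ (i = k ∧ j = 1 ∧ l = b)) ?_
        fun _ _ _ _ _ _ => Or.inl
      refine h.step [((k + 1, 1, a), (k, 1, b)), ((k + 2, 1, b), (k, 1, b))] hJ hA ?_ ?_
      · simp only [P₂, stX, List.map, List.mem_cons, Prod.mk.injEq, List.not_mem_nil, or_false]
        grind
      · simp only [P₂, stX, inGrid, gadj, List.forall_mem_cons, List.not_mem_nil, false_imp_iff,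
          implies_true, and_true]
        and_intros <;> grind (splits := 20)
    match m, hk with
    | 0, hk =>
      refine Null.of_apex (k + 1) 0 a (by omega) (hA _ _ _ (by omega) (by omega) (by omega)
        (by omega)) hJ ?_
      · simp only [P₂, gadj]
        grind
    | m + 1, hk =>
      let P₃ (i j l : ℕ) : Prop := (k + 1 ≤ i ∧ (i = k + 1 → (j = 1 ↔ l = b)) ∧
        (i = k + 2 → j ≠ 1 ∧ l = a) ∧ (i = k + 3 → l = a → j = 1)) ∨ (i = k ∧ j = 1)
      let P₄ (i j l : ℕ) : Prop := (k + 1 ≤ i ∧ (i = k + 1 → j ≠ 1) ∧ (i = k + 2 → j ≠ 1 ∧ l = a) ∧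
        (i = k + 3 → l = a → j = 1) ∧ (i = k + 4 → j = 1 → l ≠ b)) ∨ (i = k ∧ j = 1)
      suffices h : Null n A fun i j l => J i j l ∨ P₄ i j l by
        have h' : Null n A fun i j l => J i j l ∨ P₃ i j l := by
          refine h.step [((k + 4, 1, b), (k + 3, 0, b)), ((k + 1, 1, b), (k, 1, a))] hJ hA ?_ ?_
          · simp only [P₃, P₄, List.map, List.mem_cons, Prod.mk.injEq, List.not_mem_nil, or_false]
            grind
          · simp only [P₃, P₄, inGrid, gadj, List.forall_mem_cons, List.not_mem_nil, false_imp_iff,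
              implies_true, and_true]
            and_intros <;> grind (splits := 20)
        refine h'.step [((k + 2, 0, b), (k + 1, 0, a)), ((k + 3, 0, a), (k + 1, 0, a)),
          ((k + 2, 2, b), (k + 1, 2, a)), ((k + 3, 2, a), (k + 1, 2, a))] hJ hA ?_ ?_
        · simp only [P₂, P₃, List.map, List.mem_cons, Prod.mk.injEq, List.not_mem_nil, or_false]
          grind
        · simp only [P₂, P₃, inGrid, gadj, List.forall_mem_cons, List.not_mem_nil, false_imp_iff,
            implies_true, and_true]
          and_intros <;> grind (splits := 20)
      have h := null_X (n := n) (A := A) m (k + 2) b a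
        (fun i j l => J i j l ∨ ((i = k ∧ j = 1) ∨ (i = k + 1 ∧ j ≠ 1))) (by omega) (by omega)
        (by grind) (by grind)
      refine h.assoc.step [((k + 2, 0, a), (k + 1, 0, b)), ((k + 2, 2, a), (k + 1, 2, b))] hJ hA ?_ ?_
      · simp only [P₄, stX, List.map, List.mem_cons, Prod.mk.injEq, List.not_mem_nil, or_false]
        grind
      · simp only [P₄, stX, inGrid, gadj, List.forall_mem_cons, List.not_mem_nil, false_imp_iff,
          implies_true, and_true]
        and_intros <;> grind (splits := 20)

/-- The layers from `k + 1` on, with an independent triple in layer `k + 1` and a pendant point in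
layer `k`, without one point of layer `k + 2`. -/
def stZ (k a i j l : ℕ) : Prop :=
  (k + 1 ≤ i ∧ (i = k + 1 → (j = 1 ↔ l ≠ a)) ∧ (i = k + 2 → j = 1 → l = a)) ∨
    (i = k ∧ j = 1 ∧ l ≠ a)

theorem null_Z {n : ℕ} {A : ℕ → ℕ → ℕ → Prop} : ∀ (m k a b : ℕ) (J : ℕ → ℕ → ℕ → Prop),
    a + b = 1 → k + 1 + m = n →
    (∀ i j l, J i j l → i + 1 ≤ k ∧ (i + 1 = k → (j = 1 ↔ l = a))) →
    (∀ i j l, i < n → j < 3 → l < 2 →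
      stQ k a i j l ∧ (i = k + 1 → l = a → j ≠ 1) → A i j l) →
    Null n A fun i j l => J i j l ∨ stZ k a i j l
  | 0, k, a, b, J, hab, hk, hJ, hA => by
    refine Null.of_apex k 1 b (by omega) (hA _ _ _ (by omega) (by omega) (by omega)
      (by unfold stQ; grind)) hJ ?_
    · simp only [stZ, gadj]
      grind
  | 1, k, a, b, J, hab, hk, hJ, hA => by
    refine Null.of_apex (k + 1) 0 a (by omega) (hA _ _ _ (by omega) (by omega) (by omega)
      (by unfold stQ; grind)) hJ ?_
    · simp only [stZ, gadj]
      grind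
  | m + 2, k, a, b, J, hab, hk, hJ, hA => by
    let P₃ (i j l : ℕ) : Prop := (k ≤ i ∧ (i ≤ k + 1 → (j = 1 ↔ l = b)) ∧
      (i = k + 2 → j ≠ 1 ∧ l = a) ∧ (i = k + 3 → l = a → j = 1))
    let E (i j l : ℕ) : Prop := k ≤ i ∧ i ≤ k + 1 ∧ (j = 1 ↔ l = b)
    have h := null_Z (n := n) (A := A) m (k + 2) b a (fun i j l => J i j l ∨ E i j l) (by omega) (by omega)
      (by simp only [E]; grind) (by simp only [stQ] at hA ⊢; grind)
    have h₁ : Null n A fun i j l => J i j l ∨ (E i j l ∨ stX (k + 3) b i j l) := by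
      refine Null.mono (P₁ := fun i j l => (E i j l ∨ stX (k + 3) b i j l) ∨
        (i = k + 2 ∧ j = 1 ∧ l = a)) ?_ fun _ _ _ _ _ _ => Or.inl
      refine h.assoc.step [((k + 3, 1, b), (k + 2, 1, a)), ((k + 4, 1, a), (k + 2, 1, a))] hJ hA ?_ ?_
      · simp only [E, stX, stZ, List.map, List.mem_cons, Prod.mk.injEq, List.not_mem_nil, or_false]
        grind
      · simp only [E, stX, stZ, stQ, inGrid, gadj, List.forall_mem_cons, List.not_mem_nil, false_imp_iff,
          implies_true, and_true]
        and_intros <;> grind (splits := 20)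
    have h₂ : Null n A fun i j l => J i j l ∨ P₃ i j l := by
      refine h₁.step [((k + 4, 1, b), (k + 3, 0, b)), ((k + 2, 0, a), (k, 0, a)),
        ((k + 2, 2, a), (k, 2, a))] hJ hA ?_ ?_
      · simp only [E, stX, P₃, List.map, List.mem_cons, Prod.mk.injEq, List.not_mem_nil, or_false]
        grind
      · simp only [E, stX, P₃, stQ, inGrid, gadj, List.forall_mem_cons, List.not_mem_nil, false_imp_iff,
          implies_true, and_true]
        and_intros <;> grind (splits := 20)
    refine h₂.step [((k + 2, 0, b), (k + 1, 0, a)), ((k + 3, 0, a), (k + 1, 0, a)),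
      ((k + 2, 2, b), (k + 1, 2, a)), ((k + 3, 2, a), (k + 1, 2, a)),
      ((k + 2, 1, a), (k + 1, 0, a))] hJ hA ?_ ?_
    · simp only [P₃, stZ, List.map, List.mem_cons, Prod.mk.injEq, List.not_mem_nil, or_false]
      grind
    · simp only [P₃, stZ, stQ, inGrid, gadj, List.forall_mem_cons, List.not_mem_nil, false_imp_iff,
        implies_true, and_true]
      and_intros <;> grind (splits := 20)

/-- The layers from `k` on, with two pendant edges between the layers `k` and `k + 1`. -/
def stB (k a i j l : ℕ) : Prop :=
  k ≤ i ∧ (i ≤ k + 1 → j ≠ 1 ∧ l = a) ∧ (i = k + 2 → l = a → j = 1)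

theorem typeN_B {n k a b : ℕ} {c : ℕ → ℕ} (hab : a + b = 1) (hk : k + 2 ≤ n)
    (h : TypeN (grid n (stX (k + 2) b)) c) : TypeN (grid n (stB k a)) (sh (sh c)) := by
  have h' := (h.addEdge k 0 a (k + 1) 0 a (by omega) (by omega) (by unfold gadj; omega)
    (by simp only [stX, gadj]; grind)).addEdge k 2 a (k + 1) 2 a (by omega) (by omega)
    (by unfold gadj; omega) (by simp only [stX, gadj]; grind)
  refine h'.fold [((k + 3, 1, b), (k + 2, 0, b))] ?_ ?_ ?_
  · simp only [stX, stB]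
    grind
  · simp only [stX, stB, List.map, List.mem_cons, Prod.mk.injEq, List.not_mem_nil, or_false]
    grind
  · simp only [stX, stB, inGrid, gadj, List.forall_mem_cons, List.not_mem_nil, false_imp_iff,
      implies_true, and_true]
    grind (splits := 20)

theorem null_B {n k a b : ℕ} {A : ℕ → ℕ → ℕ → Prop} (hab : a + b = 1) (hk : k + 2 ≤ n)
    (hA : ∀ i j l, i < n → j < 3 → l < 2 →
      (i = k ∧ j ≠ 1) ∨ (i = k + 1 ∧ j = 1) ∨ k + 2 ≤ i → A i j l) :
    Null n A fun i j l => False ∨ stB k a i j l := by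
  obtain ⟨m, rfl⟩ := Nat.exists_eq_add_of_le hk
  have h := null_X (n := k + 2 + m) (A := A) m (k + 1) b a
    (fun i j l => False ∨ (i = k ∧ j ≠ 1)) (by omega) (by omega) (by grind) (by grind)
  let P (i j l : ℕ) : Prop := k ≤ i ∧ (i = k → j ≠ 1) ∧ (i = k + 1 → j ≠ 1 ∧ l = a) ∧
    (i = k + 2 → l = a → j = 1) ∧ (i = k + 3 → j = 1 → l ≠ b)
  have hJ : ∀ i j l : ℕ, False → False := fun _ _ _ h => h
  have h' : Null (k + 2 + m) A fun i j l => False ∨ P i j l := by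
    refine h.assoc.step [((k + 1, 0, a), (k, 0, b)), ((k + 1, 2, a), (k, 2, b))] hJ hA ?_ ?_
    · simp only [stX, P, List.map, List.mem_cons, Prod.mk.injEq, List.not_mem_nil, or_false]
      grind
    · simp only [stX, P, inGrid, gadj, List.forall_mem_cons, List.not_mem_nil, false_imp_iff,
        implies_true, and_true]
      and_intros <;> grind (splits := 20)
  refine h'.step [((k + 3, 1, b), (k + 2, 0, b))] hJ hA ?_ ?_
  · simp only [stB, P, List.map, List.mem_cons, Prod.mk.injEq, List.not_mem_nil, or_false]
    grind
  · simp only [stB, P, inGrid, gadj, List.forall_mem_cons, List.not_mem_nil, false_imp_iff,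
      implies_true, and_true]
    grind (splits := 20)

/-- The sequences counting spheres for `stY`. -/
def yc : ℕ → ℕ → ℕ
  | 0 => sp 0
  | 1 => sp 2
  | 2 => fun k => sp 3 k + sh (sh (sh (sp 0))) k
  | m + 3 => fun k => sp ((3 * (m + 3) + 1) / 2) k +
      sh (sh (sh fun k => qc (m + 1) k + sh (yc m) k)) k

/-- The sequences counting spheres for `stX`. -/
def xc : ℕ → ℕ → ℕ
  | 0 => sp 0
  | m + 1 => fun k => qc (m + 1) k + sh (yc m) k

lemma yc_add_two (m : ℕ) :
    yc (m + 2) = fun k => sp ((3 * (m + 2) + 1) / 2) k + sh (sh (sh (xc m))) k := by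
  rcases m with _ | m <;> rfl

lemma yc_zero_one (m : ℕ) : yc (m + 1) 0 = 0 ∧ yc (m + 1) 1 = 0 := by
  rcases m with _ | m
  · simp [yc, sp]
  · rw [yc_add_two]
    simp only [sp, sh]
    constructor <;> rw [if_neg (by omega)]

theorem typeN_Y_one {n k a b : ℕ} (hab : a + b = 1) (hk : k + 1 = n) :
    TypeN (grid n (stY k a)) (yc 1) := by
  have h : TypeN (grid n fun _ _ _ => False) (sp 0) := TypeN.of_empty (by simp)
  have h' := (h.addEdge k 0 a k 0 b (by omega) (by omega) (by unfold gadj; omega)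
    (by simp)).addEdge k 2 a k 2 b (by omega) (by omega)
    (by unfold gadj; omega) (by simp only [gadj]; grind)
  rw [sh_sp, sh_sp] at h'
  refine h'.fold [((k, 1, b), (k, 0, a))] ?_ ?_ ?_
  · simp only [stY]
    grind
  · simp only [stY, List.map, List.mem_cons, Prod.mk.injEq, List.not_mem_nil, or_false]
    grind
  · simp only [stY, inGrid, gadj, List.forall_mem_cons, List.not_mem_nil, false_imp_iff,
      implies_true, and_true]
    grind (splits := 20)

theorem typeN_Y_step {n m k a b : ℕ} (hab : a + b = 1) (hk : k + 2 + m = n)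
    (h : TypeN (grid n (stX (k + 2) b)) (xc m)) : TypeN (grid n (stY k a)) (yc (m + 2)) := by
  rw [yc_add_two]
  let A (i j l : ℕ) : Prop := stY k a i j l ∧ (i = k → j ≠ 1)
  let B (i j l : ℕ) : Prop := k ≤ i ∧ (i = k → j ≠ 1 ∧ l = a) ∧ (i = k + 1 → l = a)
  refine TypeN.split (A := A) (B := fun i j l => False ∨ B i j l) (k, 1, b) ?_ ?_ ?_ ?_
    (c' := sh (sh (xc m))) ?_ ?_ ?_ rfl ?_
  · simp only [inGrid, stY]
    grind
  · simp only [A, stY]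
    grind
  · simp only [A, B, stY, gadj]
    grind
  · have h' := (((typeN_T_U (n := n) (m + 1) (k + 1) (by omega)).1.addEdge k 0 a k 0 b (by omega)
      (by omega) (by unfold gadj; omega) (by simp only [stT, gadj]; grind)).addEdge k 2 a k 2 b
      (by omega) (by omega) (by unfold gadj; omega) (by simp only [stT, gadj]; grind))
    rw [sh_sp, sh_sp, show 3 * (m + 1) / 2 + 1 + 1 = (3 * (m + 2) + 1) / 2 by omega] at h'
    refine h'.fold [((k + 1, 0, a), (k, 0, b)), ((k + 1, 2, a), (k, 2, b))] ?_ ?_ ?_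
    · simp only [A, stY, stT]
      grind
    · simp only [A, stY, stT, List.map, List.mem_cons, Prod.mk.injEq, List.not_mem_nil, or_false]
      grind
    · simp only [A, stY, stT, inGrid, gadj, List.forall_mem_cons, List.not_mem_nil, false_imp_iff,
        implies_true, and_true]
      and_intros <;> grind (splits := 20)
  · refine (typeN_B hab (by omega) h).fold [((k + 1, 1, a), (k, 0, a)), ((k + 2, 0, a), (k, 0, a)),
      ((k + 2, 2, a), (k, 2, a))] ?_ ?_ ?_
    · simp only [B, stB]
      grind
    · simp only [B, stB, List.map, List.mem_cons, Prod.mk.injEq, List.not_mem_nil, or_false]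
      grind
    · simp only [B, stB, inGrid, gadj, List.forall_mem_cons, List.not_mem_nil, false_imp_iff,
        implies_true, and_true]
      and_intros <;> grind (splits := 20)
  · simp only [sp]
    rw [if_neg (by omega)]
  · simp only [sp]
    rw [if_neg (by omega)]
  · refine (null_B (n := n) (k := k) (A := A) hab (by omega) ?_).step (Jm := fun _ _ _ => False) (Am := A)
      [((k + 1, 1, a), (k, 0, a)), ((k + 2, 0, a), (k, 0, a)), ((k + 2, 2, a), (k, 2, a))]
      (fun _ _ _ h => h) (fun _ _ _ _ _ _ h => h) ?_ ?_
    · simp only [A, stY]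
      grind
    · simp only [B, stB, List.map, List.mem_cons, Prod.mk.injEq, List.not_mem_nil, or_false]
      grind
    · simp only [A, B, stB, stY, inGrid, gadj, List.forall_mem_cons, List.not_mem_nil, false_imp_iff,
        implies_true, and_true]
      and_intros <;> grind (splits := 20)

theorem typeN_X_one {n k a b : ℕ} (hab : a + b = 1) (hk : k + 1 = n) :
    TypeN (grid n (stX k a)) (xc 1) := by
  have h : TypeN (grid n fun _ _ _ => False) (sp 0) := TypeN.of_empty (by simp)
  have h' := h.addEdge k 0 a k 1 a (by omega) (by omega) (by unfold gadj; omega) (by simp)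
  have hxc : xc 1 = sh (sp 0) := by
    funext i
    simp [xc, yc, qc]
  rw [hxc]
  refine h'.fold [((k, 2, a), (k, 0, a)), ((k, 1, b), (k, 0, a))] ?_ ?_ ?_
  · simp only [stX]
    grind
  · simp only [stX, List.map, List.mem_cons, Prod.mk.injEq, List.not_mem_nil, or_false]
    grind
  · simp only [stX, inGrid, gadj, List.forall_mem_cons, List.not_mem_nil, false_imp_iff,
      implies_true, and_true]
    and_intros <;> grind (splits := 20)

theorem typeN_X_step {n m k a b : ℕ} (hab : a + b = 1) (hk : k + 2 + m = n)
    (h : TypeN (grid n (stY (k + 1) a)) (yc (m + 1))) :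
    TypeN (grid n (stX k a)) (xc (m + 2)) := by
  let A (i j l : ℕ) : Prop := k ≤ i ∧ (i = k → (j = 1 ↔ l = b)) ∧ (i = k + 1 → l = a → j ≠ 1)
  let B (i j l : ℕ) : Prop := k + 1 ≤ i ∧ (i = k + 1 → l = a → j ≠ 1)
  refine TypeN.split (A := A) (B := fun i j l => False ∨ B i j l) (c := qc (m + 2))
    (c' := yc (m + 1)) (k, 1, a) ?_ ?_ ?_ ?_ ?_ ?_ ?_ (yc_zero_one m).1 ?_
  · simp only [inGrid, stX]
    grind
  · simp only [A, stX]
    grind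
  · simp only [A, B, gadj]
    grind
  · have h' := typeN_triple (n := n) (k := k) hab (by omega)
      (typeN_Q m (k + 2) b a (by omega) (by omega))
    rw [sh_qc] at h'
    refine h'.fold [((k + 1, 0, b), (k, 0, a)), ((k + 2, 0, a), (k, 0, a)),
      ((k + 1, 2, b), (k, 2, a)), ((k + 2, 2, a), (k, 2, a)), ((k + 2, 1, b), (k, 1, b))] ?_ ?_ ?_
    · simp only [A]
      grind
    · simp only [A, List.map, List.mem_cons, Prod.mk.injEq, List.not_mem_nil, or_false]
      grind
    · simp only [A, inGrid, gadj, List.forall_mem_cons, List.not_mem_nil, false_imp_iff,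
        implies_true, and_true]
      and_intros <;> grind (splits := 20)
  · refine h.fold [((k + 2, 0, b), (k + 1, 0, a)), ((k + 2, 2, b), (k + 1, 2, a))] ?_ ?_ ?_
    · simp only [B, stY]
      grind
    · simp only [B, stY, List.map, List.mem_cons, Prod.mk.injEq, List.not_mem_nil, or_false]
      grind
    · simp only [B, stY, inGrid, gadj, List.forall_mem_cons, List.not_mem_nil, false_imp_iff,
        implies_true, and_true]
      and_intros <;> grind (splits := 20)
  · rw [← sh_qc]
    rfl
  · rw [← sh_qc]
    rfl
  · refine Null.mono (P₁ := fun i j l => B i j l ∨ (i = k ∧ j = 1 ∧ l = b)) ?_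
      fun _ _ _ _ _ _ => Or.inl
    refine (null_Z (n := n) (A := A) (m + 1) k a b (fun _ _ _ => False) hab (by omega) (by simp)
      ?_).step (Jm := fun _ _ _ => False) (Am := A) [((k + 1, 0, b), (k, 1, b)),
      ((k + 1, 2, b), (k, 1, b)), ((k + 2, 1, b), (k, 1, b))] (fun _ _ _ h => h)
      (fun _ _ _ _ _ _ h => h) ?_ ?_
    · simp only [A, stQ]
      grind
    · simp only [B, stZ, List.map, List.mem_cons, Prod.mk.injEq, List.not_mem_nil, or_false]
      grind
    · simp only [A, B, stZ, inGrid, gadj, List.forall_mem_cons, List.not_mem_nil, false_imp_iff,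
        implies_true, and_true]
      and_intros <;> grind (splits := 20)

theorem typeN_X_Y {n : ℕ} (m : ℕ) : ∀ k a b, a + b = 1 → k + m = n →
    TypeN (grid n (stX k a)) (xc m) ∧ TypeN (grid n (stY k a)) (yc m) := by
  induction m using Nat.strong_induction_on with
  | _ m ih =>
    intro k a b hab hk
    match m, ih, hk with
    | 0, _, hk =>
      constructor <;> refine TypeN.of_empty ?_ <;> simp only [stX, stY] <;> grind
    | 1, _, hk => exact ⟨typeN_X_one hab hk, typeN_Y_one hab hk⟩
    | m + 2, ih, hk =>
      exact ⟨typeN_X_step hab (by omega) (ih (m + 1) (by omega) (k + 1) a b hab (by omega)).2,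
        typeN_Y_step hab (by omega) (ih m (by omega) (k + 2) b a (by omega) (by omega)).1⟩

/-- The sequences counting spheres for the full grid. -/
def gc : ℕ → ℕ → ℕ
  | 0 => sp 0
  | 1 => sp 2
  | m + 2 => fun k => yc (m + 2) k + sh (sh (sh (xc m))) k

theorem typeN_grid (n : ℕ) : TypeN (grid n fun _ _ _ => True) (gc n) := by
  match n with
  | 0 => exact TypeN.of_empty (by simp)
  | 1 =>
    have h : TypeN (grid 1 fun _ _ _ => False) (sp 0) := TypeN.of_empty (by simp)
    have h' := (h.addEdge 0 0 0 0 0 1 (by omega) (by omega) (by unfold gadj; omega)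
      (by simp)).addEdge 0 2 0 0 2 1 (by omega) (by omega)
      (by unfold gadj; omega) (by simp only [gadj]; grind)
    rw [sh_sp, sh_sp] at h'
    refine h'.fold [((0, 1, 0), (0, 0, 1)), ((0, 1, 1), (0, 0, 0))] ?_ ?_ ?_
    · grind
    · simp only [List.map, List.mem_cons, Prod.mk.injEq, List.not_mem_nil, or_false]
      grind
    · simp only [inGrid, gadj, List.forall_mem_cons, List.not_mem_nil, false_imp_iff,
        implies_true, and_true]
      and_intros <;> grind (splits := 20)
  | m + 2 =>
    let A (i j l : ℕ) : Prop := i = 0 → l = 0 → j ≠ 1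
    let B (i j l : ℕ) : Prop := (i = 0 → j ≠ 1 ∧ l = 1) ∧ (i = 1 → l = 0 → j ≠ 1)
    refine TypeN.split (A := A) (B := fun i j l => False ∨ B i j l) (c := yc (m + 2))
      (c' := sh (sh (xc m))) (0, 1, 0) ?_ ?_ ?_ ?_ ?_ (yc_zero_one _).1 (yc_zero_one _).2 rfl ?_
    · simp only [inGrid]
      grind
    · simp only [A]
      grind
    · simp only [A, B, gadj]
      grind
    · refine (typeN_X_Y (m + 2) 0 0 1 rfl (by omega)).2.fold
        [((1, 0, 1), (0, 0, 0)), ((1, 2, 1), (0, 2, 0))] ?_ ?_ ?_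
      · simp only [A, stY]
        grind
      · simp only [A, stY, List.map, List.mem_cons, Prod.mk.injEq, List.not_mem_nil, or_false]
        grind
      · simp only [A, stY, inGrid, gadj, List.forall_mem_cons, List.not_mem_nil, false_imp_iff,
          implies_true, and_true]
        and_intros <;> grind (splits := 20)
    · refine (typeN_B (k := 0) (a := 1) (b := 0) rfl (by omega)
        (typeN_X_Y m 2 0 1 rfl (by omega)).1).fold [((1, 0, 0), (0, 0, 1)), ((1, 1, 1), (0, 0, 1)),
        ((2, 0, 1), (0, 0, 1)), ((1, 2, 0), (0, 2, 1)), ((2, 2, 1), (0, 2, 1))] ?_ ?_ ?_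
      · simp only [B, stB]
        grind
      · simp only [B, stB, List.map, List.mem_cons, Prod.mk.injEq, List.not_mem_nil, or_false]
        grind
      · simp only [B, stB, inGrid, gadj, List.forall_mem_cons, List.not_mem_nil, false_imp_iff,
          implies_true, and_true]
        and_intros <;> grind (splits := 20)
    · refine (null_B (n := m + 2) (k := 0) (a := 1) (b := 0) (A := A) rfl (by omega) ?_).step
        (Jm := fun _ _ _ => False) (Am := A) [((1, 0, 0), (0, 0, 1)), ((1, 1, 1), (0, 0, 1)),
        ((2, 0, 1), (0, 0, 1)), ((1, 2, 0), (0, 2, 1)), ((2, 2, 1), (0, 2, 1))]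
        (fun _ _ _ h => h) (fun _ _ _ _ _ _ h => h) ?_ ?_
      · simp only [A]
        grind
      · simp only [B, stB, List.map, List.mem_cons, Prod.mk.injEq, List.not_mem_nil, or_false]
        grind
      · simp only [A, B, stB, inGrid, gadj, List.forall_mem_cons, List.not_mem_nil, false_imp_iff,
          implies_true, and_true]
        and_intros <;> grind (splits := 20)

lemma yc_add_three (m k : ℕ) : yc (m + 3) k = sp ((3 * m + 10) / 2) k + qc (m + 3) k +
    if 4 ≤ k then yc m (k - 4) else 0 := by
  rw [← sh_qc, yc, show 3 * (m + 3) + 1 = 3 * m + 10 by ring]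
  rcases k with _ | _ | _ | _ | k <;> simp [sh, add_assoc]

lemma yc_add_six (m k : ℕ) : yc (m + 6) k = sp ((3 * m + 19) / 2) k +
    2 * sp ((3 * m + 18) / 2) k + if 8 ≤ k then yc m (k - 8) else 0 := by
  rw [show m + 6 = m + 3 + 3 by ring, yc_add_three, yc_add_three]
  have h : k - 4 - 4 = k - 8 := by omega
  rw [h]
  simp only [sp, qc]
  split_ifs <;> (try simp only [sp, Pi.zero_apply]) <;> (try split_ifs) <;> omega

lemma yc_eq (q k : ℕ) :
    (yc (6 * q) k = if 8 * q < k ∧ k ≤ 9 * q then 3 else if k = 8 * q then 1 else 0) ∧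
    (yc (6 * q + 1) k = if k = 9 * q + 2 then 1 else
      if 8 * q + 2 ≤ k ∧ k ≤ 9 * q + 1 then 3 else 0) ∧
    (yc (6 * q + 2) k = if 8 * q + 3 < k ∧ k ≤ 9 * q + 3 then 3 else
      if k = 8 * q + 3 then 2 else 0) ∧
    (yc (6 * q + 3) k = if k = 9 * q + 5 then 1 else
      if 8 * q + 5 ≤ k ∧ k ≤ 9 * q + 4 then 3 else if k = 8 * q + 4 then 1 else 0) ∧
    (yc (6 * q + 4) k = if 8 * q + 6 ≤ k ∧ k ≤ 9 * q + 6 then 3 else 0) ∧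
    (yc (6 * q + 5) k = if k = 9 * q + 8 then 1 else
      if 8 * q + 8 ≤ k ∧ k ≤ 9 * q + 7 then 3 else if k = 8 * q + 7 then 2 else 0) := by
  induction q generalizing k with
  | zero =>
    refine ⟨?_, ?_, ?_, ?_, ?_, ?_⟩
    · simp only [Nat.mul_zero, yc, sp]
      split_ifs <;> omega
    · simp only [Nat.mul_zero, Nat.zero_add, yc, sp]
      split_ifs <;> omega
    · simp only [Nat.mul_zero, Nat.zero_add, yc, sh_sp, sp]
      split_ifs <;> omega
    · rw [yc_add_three 0]
      simp only [yc, qc, sp]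
      split_ifs <;> (try simp only [sp, Pi.zero_apply]) <;> (try split_ifs) <;> first | omega | contradiction
    · rw [yc_add_three 1]
      simp only [yc, qc, sp]
      split_ifs <;> (try simp only [sp]) <;> (try split_ifs) <;> omega
    · rw [yc_add_three 2]
      simp only [yc, qc, sp, sh_sp]
      split_ifs <;> (try simp only [sp, Pi.zero_apply]) <;> (try split_ifs) <;> first | omega | contradiction
  | succ q ih =>
    obtain ⟨h0, h1, h2, h3, h4, h5⟩ := ih (k - 8)
    refine ⟨?_, ?_, ?_, ?_, ?_, ?_⟩
    · rw [show 6 * (q + 1) = 6 * q + 6 by ring, yc_add_six, h0]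
      simp only [sp]
      split_ifs <;> omega
    · rw [show 6 * (q + 1) + 1 = 6 * q + 1 + 6 by ring, yc_add_six, h1]
      simp only [sp]
      split_ifs <;> omega
    · rw [show 6 * (q + 1) + 2 = 6 * q + 2 + 6 by ring, yc_add_six, h2]
      simp only [sp]
      split_ifs <;> omega
    · rw [show 6 * (q + 1) + 3 = 6 * q + 3 + 6 by ring, yc_add_six, h3]
      simp only [sp]
      split_ifs <;> omega
    · rw [show 6 * (q + 1) + 4 = 6 * q + 4 + 6 by ring, yc_add_six, h4]
      simp only [sp]
      split_ifs <;> omega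
    · rw [show 6 * (q + 1) + 5 = 6 * q + 5 + 6 by ring, yc_add_six, h5]
      simp only [sp]
      split_ifs <;> omega

lemma gc_eq {m : ℕ} (hm : 1 ≤ m) (k : ℕ) : gc m k + sp ((3 * m + 1) / 2) k = 2 * yc m k := by
  rcases m with _ | _ | m
  · omega
  · simp [gc, yc, two_mul]
  · rw [gc, yc_add_two]
    ring

theorem hasType_grid {n : ℕ} (hn : 1 ≤ n) :
    HasType (grid n fun _ _ _ => True) fun k => gc n (k + 1) := by
  rcases typeN_grid n with ⟨-, h⟩ | h
  · refine (h (0, 0, 0) (grid_diag.2 ?_)).elim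
    exact ⟨by omega, by norm_num, by norm_num, trivial⟩
  · exact h.2

section Wedge

variable {c : ℕ → ℕ}

/-- The vertices of the cross-polytope with index `x` in a bouquet: `(l, s)` is the end of sign `s`
of the axis `l`, and the positive end of the axis `0` is the common vertex. -/
def cell (x : Σ k, Fin (c k)) (p : Fin (x.1 + 1) × Bool) :
    Option ((Σ k, Fin (c k)) × ℕ × Bool) :=
  if p = (0, true) then none else some (x, p.1, p.2)

lemma cell_injective (x : Σ k, Fin (c k)) : Function.Injective (cell x) := by
  rintro ⟨l, s⟩ ⟨l', s'⟩ h
  unfold cell at h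
  split_ifs at h with h1 h2 h2
  · rw [h1, h2]
  · simpa [Prod.ext_iff, Fin.ext_iff] using h

lemma bouquetRel_cell (x : Σ k, Fin (c k)) {p q : Fin (x.1 + 1) × Bool} :
    bouquetRel Sigma.fst (cell x p) (cell x q) ↔ (p.1 = q.1 → p.2 = q.2) := by
  obtain ⟨⟨l, hl⟩, s⟩ := p
  obtain ⟨⟨l', hl'⟩, s'⟩ := q
  unfold cell
  split_ifs with h1 h2 h2 <;> simp only [Prod.mk.injEq, Fin.ext_iff, Fin.val_zero] at h1 h2 <;>
    simp only [bouquetRel, Fin.mk.injEq]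
  · simp [h1, h2]
  · grind
  · grind
  · grind

/-- The positive part of `a` or of `-a`. -/
noncomputable def part (s : Bool) (a : ℝ) : ℝ := max (bif s then a else -a) 0

lemma part_nonneg (s : Bool) (a : ℝ) : 0 ≤ part s a := le_max_right _ _

lemma part_sub_part (a : ℝ) : part true a - part false a = a := by
  simp only [part, cond_true, cond_false]
  rcases le_total 0 a with h | h
  · rw [max_eq_left h, max_eq_right (by linarith), sub_zero]
  · rw [max_eq_right h, max_eq_left (by linarith)]; ring

lemma part_add_part (a : ℝ) : part true a + part false a = |a| := by
  simp only [part, cond_true, cond_false]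
  rcases le_total 0 a with h | h
  · rw [max_eq_left h, max_eq_right (by linarith), abs_of_nonneg h, add_zero]
  · rw [max_eq_right h, max_eq_left (by linarith), abs_of_nonpos h, zero_add]

lemma part_eq_zero {s s' : Bool} {a : ℝ} (h : part s a ≠ 0) (h' : part s' a ≠ 0) : s = s' := by
  by_contra hs
  unfold part at h h'
  rcases le_total 0 a with ha | ha <;> cases s <;> cases s' <;> simp_all

/-- The point of the cross-polytope `x` with coordinates `q`. -/
noncomputable def cellFun (x : Σ k, Fin (c k)) (q : Fin (x.1 + 1) → ℝ)
    (v : Option ((Σ k, Fin (c k)) × ℕ × Bool)) : ℝ :=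
  open Classical in
  ∑ p : Fin (x.1 + 1) × Bool, if cell x p = v then part p.2 (q p.1) else 0

lemma cellFun_cell (x : Σ k, Fin (c k)) (q : Fin (x.1 + 1) → ℝ) (p : Fin (x.1 + 1) × Bool) :
    cellFun x q (cell x p) = part p.2 (q p.1) := by
  classical
  unfold cellFun
  simp only [(cell_injective x).eq_iff]
  simp

lemma cellFun_ne_zero {x : Σ k, Fin (c k)} {q : Fin (x.1 + 1) → ℝ}
    {v : Option ((Σ k, Fin (c k)) × ℕ × Bool)} (h : cellFun x q v ≠ 0) : ∃ p, cell x p = v := by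
  classical
  obtain ⟨p, -, hp⟩ := Finset.exists_ne_zero_of_sum_ne_zero h
  exact ⟨p, by by_contra h'; exact hp (if_neg h')⟩

lemma sum_cell [Finite (Σ k, Fin (c k))] (x : Σ k, Fin (c k))
    {f : Option ((Σ k, Fin (c k)) × ℕ × Bool) → ℝ} (hf : ∀ v, f v ≠ 0 → ∃ p, cell x p = v) :
    ∑ v ∈ (bouquet (Sigma.fst : (Σ k, Fin (c k)) → ℕ)).verts, f v = ∑ p, f (cell x p) := by
  refine (Finset.sum_of_injOn (cell x) (cell_injective x).injOn ?_ ?_ fun _ _ => rfl).symm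
  · exact fun p _ => mem_verts.2 ((bouquetRel_cell x).2 fun _ => rfl)
  · intro v _ hv
    by_contra h
    obtain ⟨p, rfl⟩ := hf v h
    exact hv ⟨p, Finset.mem_coe.2 (Finset.mem_univ _), rfl⟩

lemma cellFun_mem [Finite (Σ k, Fin (c k))] (x : Σ k, Fin (c k)) {q : Fin (x.1 + 1) → ℝ}
    (hq : ∑ l, |q l| = 1) :
    (∀ v, 0 ≤ cellFun x q v) ∧
    (∀ u v, cellFun x q u ≠ 0 → cellFun x q v ≠ 0 →
      (bouquet (Sigma.fst : (Σ k, Fin (c k)) → ℕ)).r u v) ∧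
    ∑ v ∈ (bouquet (Sigma.fst : (Σ k, Fin (c k)) → ℕ)).verts, cellFun x q v = 1 := by
  refine ⟨fun v => ?_, fun u v hu hv => ?_, ?_⟩
  · refine Finset.sum_nonneg fun p _ => ?_
    split_ifs
    exacts [part_nonneg _ _, le_rfl]
  · obtain ⟨p, rfl⟩ := cellFun_ne_zero hu
    obtain ⟨p', rfl⟩ := cellFun_ne_zero hv
    rw [cellFun_cell] at hu hv
    exact (bouquetRel_cell x).2 fun h => part_eq_zero hu (h ▸ hv)
  · refine (sum_cell x fun v => cellFun_ne_zero).trans ?_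
    simp only [cellFun_cell, Fintype.sum_prod_type, Fintype.sum_bool, part_add_part, hq]

/-- The rescaling of a vector to norm one for the sum norm. -/
noncomputable def unitSum {k : ℕ} (p : EuclideanSpace ℝ (Fin (k + 1))) (l : Fin (k + 1)) : ℝ :=
  p l / ∑ j, |p j|

lemma sum_abs_pos {k : ℕ} (p : sph k) : 0 < ∑ j, |p.1 j| := by
  refine (Finset.sum_nonneg fun _ _ => abs_nonneg _).lt_of_ne' fun h => ?_
  have h' : p.1 = 0 := by
    ext j
    simpa using (Finset.sum_eq_zero_iff_of_nonneg fun _ _ => abs_nonneg _).1 h j (Finset.mem_univ j)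
  simpa [h'] using p.2

lemma sum_abs_unitSum {k : ℕ} (p : sph k) : ∑ l, |unitSum p.1 l| = 1 := by
  have h := sum_abs_pos p
  simp only [unitSum, abs_div, abs_of_pos h]
  rw [← Finset.sum_div, div_self h.ne']

lemma eq_of_unitSum {k : ℕ} {p q : sph k} {t : ℝ} (ht : 0 < t)
    (h : ∀ l, unitSum p.1 l = t * q.1 l) : p = q := by
  have hp := sum_abs_pos p
  have e : p.1 = ((∑ j, |p.1 j|) * t) • q.1 := by
    ext l
    have := h l
    rw [unitSum, div_eq_iff hp.ne'] at this
    simp only [PiLp.smul_apply, smul_eq_mul, this]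
    ring
  have hn : ‖p.1‖ = 1 := mem_sphere_zero_iff_norm.1 p.2
  rw [e, norm_smul, mem_sphere_zero_iff_norm.1 q.2, mul_one, Real.norm_of_nonneg (by positivity)]
    at hn
  rw [hn, one_smul] at e
  exact Subtype.ext e

lemma unitSum_injective {k : ℕ} {p q : sph k} (h : unitSum p.1 = unitSum q.1) : p = q :=
  eq_of_unitSum (t := (∑ j, |q.1 j|)⁻¹) (inv_pos.2 (sum_abs_pos q)) fun l => by
    rw [h, unitSum, div_eq_inv_mul]

lemma exists_unitSum {k : ℕ} {q : Fin (k + 1) → ℝ} (hq : ∑ l, |q l| = 1) :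
    ∃ p : sph k, unitSum p.1 = q := by
  let v : EuclideanSpace ℝ (Fin (k + 1)) := WithLp.toLp 2 q
  have hv : v ≠ 0 := by
    intro h
    have : ∀ l, q l = 0 := fun l => congrFun (congrArg WithLp.ofLp h) l
    simp [this] at hq
  have hn : 0 < ‖v‖ := norm_pos_iff.2 hv
  refine ⟨⟨‖v‖⁻¹ • v, by simp [norm_smul, hn.ne']⟩, funext fun l => ?_⟩
  have e : ∀ l, (‖v‖⁻¹ • v) l = ‖v‖⁻¹ * q l := fun l => rfl
  simp only [unitSum, e, abs_mul, ← Finset.mul_sum, hq, abs_of_pos (inv_pos.2 hn)]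
  field_simp

lemma unitSum_basePt (k : ℕ) (l : Fin (k + 1)) :
    unitSum (basePt k).1 l = if l = 0 then 1 else 0 := by
  simp [unitSum, basePt, apply_ite abs]

lemma eq_basePt {k : ℕ} {p : sph k}
    (h : ∀ l s, (l, s) ≠ ((0 : Fin (k + 1)), true) → part s (unitSum p.1 l) = 0) :
    p = basePt k := by
  have h0 : ∀ l, l ≠ 0 → unitSum p.1 l = 0 := fun l hl => by
    rw [← part_sub_part (unitSum p.1 l), h l true (by simp [hl]), h l false (by simp), sub_zero]
  have h1 := sum_abs_unitSum p
  rw [Finset.sum_eq_single 0 (fun l _ hl => by rw [h0 l hl, abs_zero]) (by simp),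
    ← part_add_part, h 0 false (by simp), add_zero] at h1
  have h2 := part_sub_part (unitSum p.1 0)
  rw [h1, h 0 false (by simp), sub_zero] at h2
  refine unitSum_injective (funext fun l => ?_)
  rw [unitSum_basePt]
  split_ifs with hl
  exacts [hl ▸ h2.symm, h0 l hl]

lemma cellFun_basePt (x : Σ k, Fin (c k)) (v : Option ((Σ k, Fin (c k)) × ℕ × Bool)) :
    cellFun x (unitSum (basePt x.1).1) v = if v = none then 1 else 0 := by
  by_cases hv : ∃ p, cell x p = v
  · obtain ⟨⟨l, s⟩, rfl⟩ := hv
    rw [cellFun_cell]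
    simp only [unitSum_basePt, cell]
    cases s <;> by_cases hl : l = 0 <;> simp [part, hl]
  · have h0 : cellFun x (unitSum (basePt x.1).1) v = 0 := by
      by_contra h
      exact hv (cellFun_ne_zero h)
    rw [h0, if_neg]
    rintro rfl
    exact hv ⟨(0, true), if_pos rfl⟩

lemma exists_cell (x : Σ k, Fin (c k)) (p : sph x.1) (hp : p ≠ basePt x.1) :
    ∃ l s, cellFun x (unitSum p.1) (some (x, l, s)) ≠ 0 := by
  by_contra! h
  refine hp (eq_basePt fun l s hls => ?_)
  rw [← cellFun_cell x _ (l, s), cell, if_neg hls]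
  exact h _ _

lemma cell_eq_some {x y : Σ k, Fin (c k)} {p : Fin (x.1 + 1) × Bool} {l : ℕ} {s : Bool}
    (h : cell x p = some (y, l, s)) : x = y := by
  unfold cell at h
  split_ifs at h
  simp only [Option.some.injEq, Prod.mk.injEq] at h
  exact h.1

variable [Finite (Σ k, Fin (c k))]

/-- The map from the wedge of spheres to the bouquet of cross-polytopes. -/
noncomputable def wedgeMap : sphereWedge c →
    (bouquet (Sigma.fst : (Σ k, Fin (c k)) → ℕ)).real :=
  Quot.lift (fun z => ⟨cellFun ⟨z.1, z.2.1⟩ (unitSum z.2.2.1),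
      cellFun_mem ⟨z.1, z.2.1⟩ (sum_abs_unitSum z.2.2)⟩) (by
    rintro ⟨k, j, p⟩ ⟨k', j', p'⟩ (h | ⟨h, h'⟩)
    · rw [h]
    · simp only at h h'
      subst h h'
      exact Subtype.ext (funext fun v =>
        (cellFun_basePt ⟨k, j⟩ v).trans (cellFun_basePt ⟨k', j'⟩ v).symm))

lemma continuous_wedgeMap : Continuous (wedgeMap (c := c)) := by
  refine continuous_quot_lift _ (continuous_sigma fun k => Continuous.subtype_mk ?_ _)
  refine continuous_pi fun v => continuous_prod_of_discrete_left.2 fun j => ?_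
  have h : Continuous fun p : sph k => cellFun ⟨k, j⟩ (unitSum p.1) v := by
    unfold cellFun
    refine continuous_finsetSum _ fun q _ => ?_
    split_ifs
    · unfold part unitSum
      have hq : Continuous fun p : sph k => p.1 q.1 / ∑ j, |p.1 j| := by
        refine Continuous.div ?_ ?_ fun p => (sum_abs_pos p).ne' <;> fun_prop
      cases q.2
      · exact hq.neg.max continuous_const
      · exact hq.max continuous_const
    · exact continuous_const
  exact h

lemma wedgeMap_injective : Function.Injective (wedgeMap (c := c)) := by
  rintro ⟨k, j, p⟩ ⟨k', j', p'⟩ h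
  have h : cellFun ⟨k, j⟩ (unitSum p.1) = cellFun ⟨k', j'⟩ (unitSum p'.1) := congrArg Subtype.val h
  apply Quot.sound
  have key : ∀ {x y : Σ k, Fin (c k)} {p : sph x.1} {q : sph y.1},
      cellFun x (unitSum p.1) = cellFun y (unitSum q.1) → p = basePt x.1 → q = basePt y.1 := by
    intro x y p q h hp
    by_contra hq
    obtain ⟨l, s, hls⟩ := exists_cell y q hq
    rw [← h, hp, cellFun_basePt] at hls
    simp at hls
  by_cases hp : p = basePt k
  · exact Or.inr ⟨hp, key (x := ⟨k, j⟩) (y := ⟨k', j'⟩) h hp⟩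
  · obtain ⟨l, s, hls⟩ := exists_cell ⟨k, j⟩ p hp
    rw [h] at hls
    obtain ⟨q, hq⟩ := cellFun_ne_zero hls
    cases cell_eq_some hq
    have : p = p' := unitSum_injective (funext fun l => by
      rw [← part_sub_part (unitSum p.1 l), ← part_sub_part (unitSum p'.1 l),
        ← cellFun_cell ⟨k, j⟩ _ (l, true), ← cellFun_cell ⟨k, j⟩ _ (l, false), h,
        cellFun_cell, cellFun_cell])
    exact Or.inl (by rw [this])

lemma wedgeMap_surjective [Nonempty (Σ k, Fin (c k))] :
    Function.Surjective (wedgeMap (c := c)) := by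
  rintro ⟨f, h0, hr, hs⟩
  obtain ⟨x, hx⟩ : ∃ x : Σ k, Fin (c k), ∀ v, f v ≠ 0 → ∃ p, cell x p = v := by
    by_cases h : ∃ x l s, f (some (x, l, s)) ≠ 0
    · obtain ⟨x, l, s, h⟩ := h
      refine ⟨x, ?_⟩
      rintro (_ | ⟨y, l', s'⟩) hv
      · exact ⟨(0, true), if_pos rfl⟩
      · obtain ⟨rfl, -, h2, -, -, h4⟩ := hr _ _ h hv
        refine ⟨(⟨l', Nat.lt_succ_of_le h2⟩, s'), if_neg fun h => h4 ?_⟩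
        simpa [Fin.ext_iff] using h
    · push Not at h
      obtain ⟨x⟩ := ‹Nonempty (Σ k, Fin (c k))›
      refine ⟨x, ?_⟩
      rintro (_ | ⟨y, l', s'⟩) hv
      · exact ⟨(0, true), if_pos rfl⟩
      · exact (hv (h _ _ _)).elim
  let q : Fin (x.1 + 1) → ℝ := fun l => f (cell x (l, true)) - f (cell x (l, false))
  have hq : ∀ l s, part s (q l) = f (cell x (l, s)) := by
    intro l s
    have h1 := h0 (cell x (l, true))
    have h2 := h0 (cell x (l, false))
    have h3 : f (cell x (l, true)) = 0 ∨ f (cell x (l, false)) = 0 := by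
      by_contra! h
      simpa using (bouquetRel_cell x).1 (hr _ _ h.1 h.2) rfl
    simp only [part, q]
    cases s <;> rcases h3 with h3 | h3 <;> simp [h3, h1, h2]
  have hsum : ∑ l, |q l| = 1 := by
    rw [← hs, sum_cell x hx, Fintype.sum_prod_type]
    simp only [Fintype.sum_bool, ← part_add_part, hq]
  obtain ⟨p, hp⟩ := exists_unitSum hsum
  refine ⟨Quot.mk _ ⟨x.1, x.2, p⟩, Subtype.ext (funext fun v => ?_)⟩
  change cellFun x (unitSum p.1) v = f v
  rw [hp]
  by_cases hv : ∃ p, cell x p = v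
  · obtain ⟨⟨l, s⟩, rfl⟩ := hv
    rw [cellFun_cell, hq]
  · rw [not_imp_comm.1 (hx v) hv, not_imp_comm.1 cellFun_ne_zero hv]

lemma compactSpace_sphereWedge : CompactSpace (sphereWedge c) := by
  let g : (Σ x : (Σ k, Fin (c k)), sph x.1) → sphereWedge c :=
    fun z => Quot.mk _ ⟨z.1.1, z.1.2, z.2⟩
  have hg : Continuous g := continuous_sigma fun x =>
    continuous_quot_mk.comp ((continuous_sigmaMk (σ := fun k => Fin (c k) × sph k)).comp
      (Continuous.prodMk_right x.2))
  refine isCompact_univ_iff.1 ?_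
  have : Set.range g = Set.univ := by
    refine Set.range_eq_univ.2 ?_
    rintro ⟨k, j, p⟩
    exact ⟨⟨⟨k, j⟩, p⟩, rfl⟩
  rw [← this]
  exact isCompact_range hg

/-- The bouquet of cross-polytopes realizes the wedge of spheres. -/
theorem nonempty_homeomorph_bouquet [Nonempty (Σ k, Fin (c k))] :
    Nonempty (sphereWedge c ≃ₜ (bouquet (Sigma.fst : (Σ k, Fin (c k)) → ℕ)).real) := by
  have := compactSpace_sphereWedge (c := c)
  exact ⟨Continuous.homeoOfEquivCompactToT2
    (f := Equiv.ofBijective wedgeMap ⟨wedgeMap_injective, wedgeMap_surjective⟩)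
    continuous_wedgeMap⟩

end Wedge
theorem HasType.homotopyEquiv {F : FlagCplx} {c : ℕ → ℕ} (h : HasType F c) (hc : ∃ k, c k ≠ 0) :
    Nonempty (ContinuousMap.HomotopyEquiv F.real (sphereWedge c)) := by
  obtain ⟨ι, _, d, hd, hE⟩ := h
  let e : ι ≃ Σ k, Fin (c k) := (Equiv.sigmaFiberEquiv d).symm.trans
    (Equiv.sigmaCongrRight fun k => Finite.equivFinOfCardEq (hd k))
  have he : ∀ i, (e i).1 = d i := fun i => rfl
  have : Finite (Σ k, Fin (c k)) := Finite.of_equiv ι e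
  have : Nonempty (Σ k, Fin (c k)) := hc.elim fun k hk => ⟨⟨k, 0, Nat.pos_of_ne_zero hk⟩⟩
  have hE' : Eqv (bouquet d) (bouquet (Sigma.fst : (Σ k, Fin (c k)) → ℕ)) := by
    refine Eqv.iso (F := bouquet d) (G := bouquet Sigma.fst)
      (Option.map fun p => (e p.1, p.2)) (Option.map fun p => (e.symm p.1, p.2)) ?_ ?_ ?_ ?_
    · rintro (_ | ⟨i, k, s⟩) (_ | ⟨j, l, t⟩) - -
      · exact Iff.rfl
      · exact Iff.rfl
      · exact Iff.rfl
      · simp only [bouquet, Option.map, bouquetRel, he, e.apply_eq_iff_eq]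
    · rintro (_ | ⟨i, k, s⟩) h
      · trivial
      · have := he (e.symm i)
        rw [e.apply_symm_apply] at this
        simpa [bouquet, Option.map, bouquetRel, this] using h
    · rintro (_ | ⟨i, k, s⟩) -
      · rfl
      · exact congrArg (fun j => some (j, k, s)) (e.symm_apply_apply i)
    · rintro (_ | ⟨i, k, s⟩) -
      · rfl
      · exact congrArg (fun j => some (j, k, s)) (e.apply_symm_apply i)
  obtain ⟨f⟩ := (hE.trans hE').real
  obtain ⟨g⟩ := nonempty_homeomorph_bouquet (c := c)
  exact ⟨f.trans g.symm.toHomotopyEquiv⟩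

/-- The independence complex of a finite graph as a flag complex. -/
def ofGraph {V : Type} [Fintype V] (G : SimpleGraph V) : FlagCplx where
  V := V
  r u v := ¬ G.Adj u v
  symm' _ _ h h' := h h'.symm
  fin := Set.toFinite _

theorem nonempty_homeomorph_ofGraph {V : Type} [Fintype V] (G : SimpleGraph V) :
    Nonempty ((indepCpx G).space ≃ₜ (ofGraph G).real) := by
  have hv : (ofGraph G).verts = (Finset.univ : Finset V) :=
    Finset.ext fun v => iff_of_true (mem_verts.2 G.irrefl) (Finset.mem_univ (α := V) v)
  refine ⟨(Homeomorph.refl (V → ℝ)).subtype fun f => ?_⟩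
  change _ ↔ (∀ v, 0 ≤ f v) ∧ (∀ u v, f u ≠ 0 → f v ≠ 0 → ¬ G.Adj u v) ∧
    ∑ v ∈ (ofGraph G).verts, f v = 1
  rw [hv]
  simp only [indepCpx, Finset.mem_filter, Finset.mem_univ, true_and]
  constructor
  · exact fun ⟨h1, h2, h3⟩ => ⟨h2, fun u v hu hv => h3 u hu v hv, h1⟩
  · exact fun ⟨h1, h2, h3⟩ => ⟨h3, h1, fun u hu v hv => h2 u v hu hv⟩

theorem eqv_ofGraph_grid {n : ℕ} (hn : 1 ≤ n) :
    Eqv (ofGraph (Gam n)) (grid n fun _ _ _ => True) := by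
  have : NeZero n := ⟨by omega⟩
  refine Eqv.iso (F := ofGraph (Gam n)) (G := grid n fun _ _ _ => True)
    (fun a : GV n => ((a.1 : ℕ), (a.2.1 : ℕ), (a.2.2 : ℕ)))
    (fun a => (Fin.ofNat n a.1, Fin.ofNat 3 a.2.1, Fin.ofNat 2 a.2.2)) ?_ ?_ ?_ ?_
  · rintro ⟨i, j, l⟩ ⟨i', j', l'⟩ - -
    simp only [grid, inGrid, ofGraph, Gam, boxProd_adj, pathGraph_adj, gadj, Fin.is_lt, true_and,
      Prod.mk.injEq, Fin.ext_iff]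
    have := l.2
    have := l'.2
    omega
  · exact fun _ _ => SimpleGraph.irrefl _
  · rintro ⟨i, j, l⟩ -
    change (Fin.ofNat n i, Fin.ofNat 3 j, Fin.ofNat 2 l) = (i, j, l)
    simp
  · rintro ⟨i, j, l⟩ ⟨⟨h1, h2, h3, -⟩, -⟩
    exact Prod.ext (Nat.mod_eq_of_lt h1) (Prod.ext (Nat.mod_eq_of_lt h2) (Nat.mod_eq_of_lt h3))

theorem homotopyEquiv_of_gc {n : ℕ} {c : ℕ → ℕ} (hn : 1 ≤ n)
    (h : ∀ k, gc n (k + 1) = c k) (hc : ∃ k, c k ≠ 0) :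
    Nonempty (ContinuousMap.HomotopyEquiv (indepCpx (Gam n)).space (sphereWedge c)) := by
  obtain ⟨e⟩ := nonempty_homeomorph_ofGraph (Gam n)
  have ht := (hasType_grid hn).congr (eqv_ofGraph_grid hn)
  rw [funext h] at ht
  obtain ⟨f⟩ := ht.homotopyEquiv hc
  exact ⟨e.toHomotopyEquiv.trans f⟩

end FlagCplx

/-- Theorem 6.11: the homotopy types of the independence complexes of the grid graphs
`Γ_n = P_n × P_3 × P_2`, as explicit wedges of spheres. -/
theorem indep_Gamma_homotopyEquiv :
    (∀ m : ℕ, 1 ≤ m → Nonempty (ContinuousMap.HomotopyEquiv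
      (indepCpx (Gam (6 * m))).space
      (sphereWedge fun d => if d = 9 * m - 1 then 5 else if d = 8 * m - 1 then 2
        else if 8 * m ≤ d ∧ d ≤ 9 * m - 2 then 6 else 0))) ∧
    (∀ m : ℕ, Nonempty (ContinuousMap.HomotopyEquiv
      (indepCpx (Gam (6 * m + 1))).space
      (sphereWedge fun d => if d = 9 * m + 1 then 1
        else if 8 * m + 1 ≤ d ∧ d ≤ 9 * m then 6 else 0))) ∧
    (Nonempty (ContinuousMap.HomotopyEquiv (indepCpx (Gam 2)).space
      (sphereWedge fun d => if d = 2 then 3 else 0))) ∧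
    (∀ m : ℕ, 1 ≤ m → Nonempty (ContinuousMap.HomotopyEquiv
      (indepCpx (Gam (6 * m + 2))).space
      (sphereWedge fun d => if d = 9 * m + 2 then 5 else if d = 8 * m + 2 then 4
        else if 8 * m + 3 ≤ d ∧ d ≤ 9 * m + 1 then 6 else 0))) ∧
    (∀ m : ℕ, Nonempty (ContinuousMap.HomotopyEquiv
      (indepCpx (Gam (6 * m + 3))).space
      (sphereWedge fun d => if d = 9 * m + 4 then 1 else if d = 8 * m + 3 then 2
        else if 8 * m + 4 ≤ d ∧ d ≤ 9 * m + 3 then 6 else 0))) ∧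
    (∀ m : ℕ, Nonempty (ContinuousMap.HomotopyEquiv
      (indepCpx (Gam (6 * m + 4))).space
      (sphereWedge fun d => if d = 9 * m + 5 then 5
        else if 8 * m + 5 ≤ d ∧ d ≤ 9 * m + 4 then 6 else 0))) ∧
    (∀ m : ℕ, Nonempty (ContinuousMap.HomotopyEquiv
      (indepCpx (Gam (6 * m + 5))).space
      (sphereWedge fun d => if d = 9 * m + 7 then 1 else if d = 8 * m + 6 then 4
        else if 8 * m + 7 ≤ d ∧ d ≤ 9 * m + 6 then 6 else 0))) := by
  refine ⟨fun m hm => FlagCplx.homotopyEquiv_of_gc (by omega) (fun k => ?_) ⟨9 * m - 1, by simp⟩,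
    fun m => FlagCplx.homotopyEquiv_of_gc (by omega) (fun k => ?_) ⟨9 * m + 1, by simp⟩,
    FlagCplx.homotopyEquiv_of_gc (by omega) (fun k => ?_) ⟨2, by simp⟩,
    fun m hm => FlagCplx.homotopyEquiv_of_gc (by omega) (fun k => ?_) ⟨9 * m + 2, by simp⟩,
    fun m => FlagCplx.homotopyEquiv_of_gc (by omega) (fun k => ?_) ⟨9 * m + 4, by simp⟩,
    fun m => FlagCplx.homotopyEquiv_of_gc (by omega) (fun k => ?_) ⟨9 * m + 5, by simp⟩,
    fun m => FlagCplx.homotopyEquiv_of_gc (by omega) (fun k => ?_) ⟨9 * m + 7, by simp⟩⟩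
  · have h := FlagCplx.gc_eq (m := 6 * m) (by omega) (k + 1)
    rw [(FlagCplx.yc_eq m (k + 1)).1, FlagCplx.sp] at h
    split_ifs at h ⊢ <;> omega
  · have h := FlagCplx.gc_eq (m := 6 * m + 1) (by omega) (k + 1)
    rw [(FlagCplx.yc_eq m (k + 1)).2.1, FlagCplx.sp] at h
    split_ifs at h ⊢ <;> omega
  · have h := FlagCplx.gc_eq (m := 6 * 0 + 2) (by omega) (k + 1)
    rw [(FlagCplx.yc_eq 0 (k + 1)).2.2.1, FlagCplx.sp] at h
    simp only [Nat.mul_zero, Nat.zero_add] at h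
    split_ifs at h ⊢ <;> omega
  · have h := FlagCplx.gc_eq (m := 6 * m + 2) (by omega) (k + 1)
    rw [(FlagCplx.yc_eq m (k + 1)).2.2.1, FlagCplx.sp] at h
    split_ifs at h ⊢ <;> omega
  · have h := FlagCplx.gc_eq (m := 6 * m + 3) (by omega) (k + 1)
    rw [(FlagCplx.yc_eq m (k + 1)).2.2.2.1, FlagCplx.sp] at h
    split_ifs at h ⊢ <;> omega
  · have h := FlagCplx.gc_eq (m := 6 * m + 4) (by omega) (k + 1)
    rw [(FlagCplx.yc_eq m (k + 1)).2.2.2.2.1, FlagCplx.sp] at h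
    split_ifs at h ⊢ <;> omega
  · have h := FlagCplx.gc_eq (m := 6 * m + 5) (by omega) (k + 1)
    rw [(FlagCplx.yc_eq m (k + 1)).2.2.2.2.2, FlagCplx.sp] at h
    split_ifs at h ⊢ <;> omega
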